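/- arXiv:1308.0425 — 2 statements merged into one kernel-verified Lean document; each statement's English description precedes it below -/
import Mathlib

section
/- Let γ ∈ (0, 1) with γ < n/2, set p = (n+2γ)/(n−2γ), and define C(n,γ) = 4^γ Γ(n/2+γ)/(π^{n/2} |Γ(−γ)|), so that the fractional Laplacian of a bounded smooth function φ is (−Δ)^γφ(x) = C(n,γ) lim_{ε→0⁺} ∫_{|y−x|>ε} (φ(x) − φ(y))/|x − y|^{n+2γ} dy. Suppose α > 0 is such that z₀(x) = α(1+|x|²)^{−(n−2γ)/2} satisfies (−Δ)^γ z₀ = z₀^p pointwise on ℝⁿ, and for μ > 0, ξ ∈ ℝⁿ set z_{μ,ξ}(x) = α(μ/(μ² + |x−ξ|²))^{(n−2γ)/2}. Then for every μ > 0 and ξ ∈ ℝⁿ, every bounded smooth function φ : ℝⁿ → ℝ satisfying the linearized equation (−Δ)^γ φ(x) = p z_{μ,ξ}(x)^{p−1} φ(x) pointwise (with the principal value defining (−Δ)^γφ(x) existing for every x) is a linear combination of the n+1 functions ∂_μ z_{μ,ξ} and ∂_{ξ_1} z_{μ,ξ}, …, ∂_{ξ_n} z_{μ,ξ}, i.e.,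 there exist c₀, c₁, …, cₙ ∈ ℝ with φ = c₀ ∂_μ z_{μ,ξ} + Σ_{i=1}^n c_i ∂_{ξ_i} z_{μ,ξ}. -/
open MeasureTheory Filter
open scoped Topology

noncomputable def z0 (n : ℕ) (γ α : ℝ) (y : EuclideanSpace ℝ (Fin n)) : ℝ :=
  α * (1 + ‖y‖ ^ 2) ^ (-(((n : ℝ) - 2 * γ) / 2))

noncomputable def zBubble (n : ℕ) (γ α : ℝ) (μ : ℝ) (ξ x : EuclideanSpace ℝ (Fin n)) : ℝ :=
  α * (μ / (μ ^ 2 + ‖x - ξ‖ ^ 2)) ^ (((n : ℝ) - 2 * γ) / 2)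

/-- The truncated integral `∫_{|y - x| > ε} (φ(x) - φ(y)) / |x - y|^{n + 2γ} dy`
whose limit as `ε → 0⁺`, multiplied by `C(n, γ)`, defines `(-Δ)^γ φ(x)` in the
principal value sense. -/
noncomputable def pvInt (n : ℕ) (γ : ℝ) (φ : EuclideanSpace ℝ (Fin n) → ℝ)
    (x : EuclideanSpace ℝ (Fin n)) (ε : ℝ) : ℝ :=
  ∫ y in {y : EuclideanSpace ℝ (Fin n) | ε < ‖y - x‖},
    (φ x - φ y) / ‖x - y‖ ^ ((n : ℝ) + 2 * γ)

/-- `C(n, γ) = 4^γ Γ(n/2 + γ) / (π^{n/2} |Γ(-γ)|)`. -/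
noncomputable def fracLapConst (n : ℕ) (γ : ℝ) : ℝ :=
  (4 : ℝ) ^ γ * Real.Gamma ((n : ℝ) / 2 + γ) /
    (Real.pi ^ ((n : ℝ) / 2) * |Real.Gamma (-γ)|)

/-!
A principal value operator `L` with a Lévy kernel is symmetric, and `L (quad q)^{-s}` is an explicit
multiple of `(quad q)^{-(s+2γ)}` for every positive quadratic polynomial `quad q`, since these are
affine images of `1 + |x|²`. Pairing a bounded solution `φ` of the linearized equation with the
bubble of `1 + |x|² + t quad q` and expanding in powers of `t` yields relations between the moments
`∫ (1 + |x|²)^{-(s+2γ)} φ u^k` of the function `u = quad q / (1 + |x|²)`. Bubbles need not be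
integrable, so only those finite differences in `t` are tested which improve the decay. This kills
the zeroth moment and, when the first moments of the functions `u` with `q = (0, b, c)` vanish, all
higher ones, because the coefficient of `t^k` is nonzero for `k ≥ 2`. The moments determine `φ` by
injectivity of the Fourier transform, so the solution space has dimension at most `n + 1`, the
number of first moments. Differentiating the pairing in `t` shows that the `n + 1` derivatives of
the bubble are solutions in the same weak sense, so they span.
-/

open scoped Convolution

section BoundedContinuous

/-- Bounded continuous real functions, as a predicate so that it applies to explicit formulas. -/
structure IsBoundedContinuous {X : Type*} [TopologicalSpace X] (f : X → ℝ) : Prop where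
  continuous : Continuous f
  bounded : ∃ C, ∀ x, |f x| ≤ C

namespace IsBoundedContinuous

variable {X Y : Type*} [TopologicalSpace X] [TopologicalSpace Y] {f g : X → ℝ}

lemma exists_nonneg_bound (hf : IsBoundedContinuous f) : ∃ C, 0 ≤ C ∧ ∀ x, |f x| ≤ C := by
  obtain ⟨C, hC⟩ := hf.bounded
  exact ⟨max C 0, le_max_right _ _, fun x => (hC x).trans (le_max_left _ _)⟩

lemma abs (hf : IsBoundedContinuous f) : IsBoundedContinuous (fun x => |f x|) where
  continuous := hf.continuous.abs
  bounded := by simpa only [abs_abs] using hf.bounded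

lemma const_mul (hf : IsBoundedContinuous f) (c : ℝ) :
    IsBoundedContinuous (fun x => c * f x) where
  continuous := hf.continuous.const_mul c
  bounded := by
    obtain ⟨C, hC⟩ := hf.bounded
    exact ⟨|c| * C, fun x => by rw [abs_mul]; gcongr; exact hC x⟩

lemma add (hf : IsBoundedContinuous f) (hg : IsBoundedContinuous g) :
    IsBoundedContinuous (fun x => f x + g x) where
  continuous := hf.continuous.add hg.continuous
  bounded := by
    obtain ⟨C, hC⟩ := hf.bounded
    obtain ⟨D, hD⟩ := hg.bounded
    exact ⟨C + D, fun x => (abs_add_le _ _).trans (add_le_add (hC x) (hD x))⟩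

lemma sub (hf : IsBoundedContinuous f) (hg : IsBoundedContinuous g) :
    IsBoundedContinuous (fun x => f x - g x) := by
  simpa [sub_eq_add_neg] using hf.add (hg.const_mul (-1))

lemma mul (hf : IsBoundedContinuous f) (hg : IsBoundedContinuous g) :
    IsBoundedContinuous (fun x => f x * g x) where
  continuous := hf.continuous.mul hg.continuous
  bounded := by
    obtain ⟨C, hC0, hC⟩ := hf.exists_nonneg_bound
    obtain ⟨D, hD⟩ := hg.bounded
    exact ⟨C * D, fun x => by rw [abs_mul]; exact mul_le_mul (hC x) (hD x) (abs_nonneg _) hC0⟩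

lemma comp (hf : IsBoundedContinuous f) {u : Y → X} (hu : Continuous u) :
    IsBoundedContinuous (fun y => f (u y)) where
  continuous := hf.continuous.comp hu
  bounded := let ⟨C, hC⟩ := hf.bounded; ⟨C, fun y => hC (u y)⟩

lemma integrable_mul [MeasurableSpace X] [OpensMeasurableSpace X] [SecondCountableTopology X]
    {μ : Measure X} {w : X → ℝ} (hf : IsBoundedContinuous f) (hw : Integrable w μ) :
    Integrable (fun x => w x * f x) μ :=
  let ⟨_, hC⟩ := hf.bounded
  hw.mul_bdd hf.continuous.aestronglyMeasurable (.of_forall hC)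

end IsBoundedContinuous

end BoundedContinuous

section Convolution

variable {E : Type*} [NormedAddCommGroup E] [MeasurableSpace E] [BorelSpace E] {μ : Measure E}
  {f g φ : E → ℝ}

lemma IsBoundedContinuous.convolution (hφ : IsBoundedContinuous φ) (hf : Integrable f μ) :
    IsBoundedContinuous (f ⋆[.mul ℝ ℝ, μ] φ) := by
  obtain ⟨C, hC⟩ := hφ.bounded
  refine ⟨BddAbove.continuous_convolution_right_of_integrable _
    ⟨C, Set.forall_mem_range.2 hC⟩ hf hφ.continuous, (∫ u, |f u| ∂μ) * C, fun x => ?_⟩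
  rw [← integral_mul_const, ← Real.norm_eq_abs, convolution_def]
  refine norm_integral_le_of_norm_le (hf.abs.mul_const C) (.of_forall fun u => ?_)
  rw [ContinuousLinearMap.mul_apply', norm_mul]
  exact mul_le_mul_of_nonneg_left (hC _) (abs_nonneg _)

variable [SecondCountableTopology E]

lemma IsBoundedContinuous.convolutionExists (hφ : IsBoundedContinuous φ) (hf : Integrable f μ) :
    ConvolutionExists f φ (.mul ℝ ℝ) μ :=
  fun _ => (hφ.comp (by fun_prop)).integrable_mul hf

variable [SFinite μ] [μ.IsAddLeftInvariant] [μ.IsNegInvariant]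

lemma convolution_convolution_comm_left (hf : Integrable f μ) (hg : Integrable g μ)
    (hφ : IsBoundedContinuous φ) :
    (f ⋆[.mul ℝ ℝ, μ] g) ⋆[.mul ℝ ℝ, μ] φ = g ⋆[.mul ℝ ℝ, μ] (f ⋆[.mul ℝ ℝ, μ] φ) := by
  have hswap : f ⋆[.mul ℝ ℝ, μ] g = g ⋆[.mul ℝ ℝ, μ] f := by
    rw [← convolution_flip, ContinuousLinearMap.flip_mul]
  rw [hswap]
  ext x
  exact convolution_assoc _ _ _ _ mul_assoc hg.aestronglyMeasurable hf.aestronglyMeasurable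
    hφ.continuous.aestronglyMeasurable (hg.ae_convolution_exists _ hf)
    (.of_forall (hφ.abs.convolutionExists hf.abs))
    ((hφ.abs.convolution hf.abs).convolutionExists hg.abs x)

lemma integral_mul_convolution_comm {S w : E → ℝ} (hS : Integrable S μ)
    (hSe : ∀ u, S (-u) = S u) (hw : Integrable w μ) (hφ : IsBoundedContinuous φ) :
    ∫ x, w x * (S ⋆[.mul ℝ ℝ, μ] φ) x ∂μ = ∫ x, φ x * (S ⋆[.mul ℝ ℝ, μ] w) x ∂μ := by
  have hwSφ : Integrable (fun p : E × E => w p.1 * S p.2 * φ (p.1 - p.2)) (μ.prod μ) :=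
    (hφ.comp (by fun_prop)).integrable_mul (hw.mul_prod hS)
  have hSwφ : Integrable (fun p : E × E => S p.2 * w (p.1 - p.2) * φ p.1) (μ.prod μ) :=
    (hφ.comp (by fun_prop)).integrable_mul (hS.convolution_integrand (.mul ℝ ℝ) hw)
  calc ∫ x, w x * (S ⋆[.mul ℝ ℝ, μ] φ) x ∂μ
      = ∫ x, ∫ u, w x * S u * φ (x - u) ∂μ ∂μ := by
        simp_rw [convolution_mul, ← integral_const_mul, mul_assoc]
    _ = ∫ u, ∫ x, w x * S u * φ (x - u) ∂μ ∂μ := integral_integral_swap hwSφ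
    _ = ∫ u, ∫ x, w (x + u) * S u * φ x ∂μ ∂μ := by
        congr 1; ext u
        rw [← integral_add_right_eq_self _ u]; simp only [add_sub_cancel_right]
    _ = ∫ u, ∫ x, S u * w (x - u) * φ x ∂μ ∂μ := by
        rw [← integral_neg_eq_self]
        simp only [hSe, ← sub_eq_add_neg, mul_comm (S _)]
    _ = ∫ x, ∫ u, S u * w (x - u) * φ x ∂μ ∂μ := (integral_integral_swap hSwφ).symm
    _ = _ := by simp_rw [convolution_mul, integral_mul_const, mul_comm]

end Convolution

section LevyKernel

variable {E : Type*} [NormedAddCommGroup E] [MeasurableSpace E]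

/-- The kernel `k` cut off at distance `ε` from the origin. -/
noncomputable def truncKer (k : E → ℝ) (ε : ℝ) : E → ℝ :=
  {h : E | ε < ‖h‖}.indicator k

/-- The truncation `φ ↦ ∫_{|h| > ε} k(h) (φ(x) - φ(x - h)) dh` of the principal value operator with
kernel `k`. -/
noncomputable def truncOp (μ : Measure E) (k : E → ℝ) (ε : ℝ) (φ : E → ℝ) (x : E) : ℝ :=
  ∫ h, truncKer k ε h * (φ x - φ (x - h)) ∂μ

/-- The principal value operator with kernel `k` maps `φ` to `f`; the truncations converge at every
point. -/
def HasPV (μ : Measure E) (k φ f : E → ℝ) : Prop :=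
  ∀ x, Tendsto (fun ε => truncOp μ k ε φ x) (𝓝[>] 0) (𝓝 (f x))

/-- A Lévy kernel: nonnegative, even, and integrable against `min 1 |h|²`. -/
structure IsLevyKernel (μ : Measure E) (k : E → ℝ) : Prop where
  nonneg : ∀ h, 0 ≤ k h
  even : ∀ h, k (-h) = k h
  measurable : Measurable k
  integrable : Integrable (fun h => min 1 (‖h‖ ^ 2) * k h) μ

namespace IsLevyKernel

variable {μ : Measure E} {k : E → ℝ}

lemma truncKer_nonneg (hk : IsLevyKernel μ k) (ε : ℝ) (h : E) : 0 ≤ truncKer k ε h :=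
  Set.indicator_nonneg (fun _ _ => hk.nonneg _) _

lemma truncKer_le (hk : IsLevyKernel μ k) (ε : ℝ) (h : E) : truncKer k ε h ≤ k h :=
  Set.indicator_le_self' (fun _ _ => hk.nonneg _) _

lemma truncKer_neg (hk : IsLevyKernel μ k) (ε : ℝ) (h : E) :
    truncKer k ε (-h) = truncKer k ε h := by
  simp [truncKer, Set.indicator_apply, hk.even]

variable [BorelSpace E]

lemma measurable_truncKer (hk : IsLevyKernel μ k) (ε : ℝ) : Measurable (truncKer k ε) :=
  hk.measurable.indicator (measurableSet_lt measurable_const measurable_norm)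

lemma integrable_truncKer (hk : IsLevyKernel μ k) {ε : ℝ} (hε : 0 < ε) :
    Integrable (truncKer k ε) μ := by
  refine (hk.integrable.const_mul (max 1 (ε ^ 2)⁻¹)).mono'
    (hk.measurable_truncKer ε).aestronglyMeasurable (.of_forall fun h => ?_)
  rw [Real.norm_of_nonneg (hk.truncKer_nonneg ε h), truncKer, Set.indicator_apply]
  have hmin : 0 ≤ min 1 (‖h‖ ^ 2) * k h := mul_nonneg (by positivity) (hk.nonneg h)
  split_ifs with hh
  · have hh : ε < ‖h‖ := hh
    have hone : 1 ≤ max 1 (ε ^ 2)⁻¹ * min 1 (‖h‖ ^ 2) := by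
      rcases le_total 1 (‖h‖ ^ 2) with h1 | h1
      · rw [min_eq_left h1, mul_one]
        exact le_max_left _ _
      · rw [min_eq_right h1]
        calc (1 : ℝ) = (ε ^ 2)⁻¹ * ε ^ 2 := by field_simp
          _ ≤ _ := by gcongr; exact le_max_right _ _
    calc k h = 1 * k h := (one_mul _).symm
      _ ≤ _ := by rw [← mul_assoc]; exact mul_le_mul_of_nonneg_right hone (hk.nonneg h)
  · positivity

variable [NormedSpace ℝ E] [FiniteDimensional ℝ E]

lemma truncOp_eq_sub_convolution (hk : IsLevyKernel μ k) {ε : ℝ} (hε : 0 < ε) {φ : E → ℝ}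
    (hφ : IsBoundedContinuous φ) :
    truncOp μ k ε φ = (∫ h, truncKer k ε h ∂μ) • φ - truncKer k ε ⋆[.mul ℝ ℝ, μ] φ := by
  have hK := hk.integrable_truncKer hε
  ext x
  rw [Pi.sub_apply, Pi.smul_apply, smul_eq_mul, convolution_mul, ← integral_mul_const,
    ← integral_sub (hK.mul_const _) ((hφ.comp (by fun_prop)).integrable_mul hK)]
  simp only [truncOp, mul_sub]

lemma isBoundedContinuous_truncOp (hk : IsLevyKernel μ k) {ε : ℝ} (hε : 0 < ε) {φ : E → ℝ}
    (hφ : IsBoundedContinuous φ) : IsBoundedContinuous (truncOp μ k ε φ) := by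
  rw [hk.truncOp_eq_sub_convolution hε hφ]
  exact (hφ.const_mul _).sub (hφ.convolution (hk.integrable_truncKer hε))

lemma abs_truncOp_le_of_support_subset (hk : IsLevyKernel μ k) {ρ : E → ℝ}
    (hρb : IsBoundedContinuous ρ) {r : ℝ} (hr : ∀ x, r < ‖x‖ → ρ x = 0) {x : E}
    (hx : r + 1 < ‖x‖) (ε : ℝ) :
    |truncOp μ k ε ρ x| ≤ ((fun h => min 1 (‖h‖ ^ 2) * k h) ⋆[.mul ℝ ℝ, μ] fun u => |ρ u|) x := by
  rw [← Real.norm_eq_abs, convolution_mul]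
  refine norm_integral_le_of_norm_le ((hρb.abs.comp (by fun_prop)).integrable_mul hk.integrable)
    (.of_forall fun h => ?_)
  rw [hr x (by linarith), zero_sub, norm_mul, norm_neg, Real.norm_eq_abs (ρ _),
    Real.norm_of_nonneg (hk.truncKer_nonneg ε h)]
  rcases le_or_gt ‖h‖ 1 with hh | hh
  · have : r < ‖x - h‖ := by linarith [norm_sub_norm_le x h]
    simp [hr _ this]
  · rw [min_eq_left (by nlinarith), one_mul]
    exact mul_le_mul_of_nonneg_right (hk.truncKer_le ε h) (abs_nonneg _)

variable [μ.IsAddHaarMeasure]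

lemma truncOp_neg (hk : IsLevyKernel μ k) {ρ : E → ℝ} (hρe : ∀ u, ρ (-u) = ρ u) (ε : ℝ) (x : E) :
    truncOp μ k ε ρ (-x) = truncOp μ k ε ρ x := by
  rw [truncOp, truncOp, ← integral_neg_eq_self]
  congr 1; ext h
  rw [hk.truncKer_neg, hρe, ← hρe (x - h)]
  congr 3; abel

lemma truncOp_convolution (hk : IsLevyKernel μ k) {ε : ℝ} (hε : 0 < ε) {ρ φ : E → ℝ}
    (hρ : IsBoundedContinuous ρ) (hρi : Integrable ρ μ) (hφ : IsBoundedContinuous φ) :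
    truncOp μ k ε ρ ⋆[.mul ℝ ℝ, μ] φ = ρ ⋆[.mul ℝ ℝ, μ] truncOp μ k ε φ := by
  have hK := hk.integrable_truncKer hε
  have hKρ := hK.integrable_convolution (.mul ℝ ℝ) hρi
  have hcφ : IsBoundedContinuous ((∫ h, truncKer k ε h ∂μ) • φ) := hφ.const_mul _
  have hKφ : IsBoundedContinuous ((-1 : ℝ) • (truncKer k ε ⋆[.mul ℝ ℝ, μ] φ)) :=
    (hφ.convolution hK).const_mul _
  rw [hk.truncOp_eq_sub_convolution hε hρ, hk.truncOp_eq_sub_convolution hε hφ, sub_eq_add_neg,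
    sub_eq_add_neg, ← neg_one_smul ℝ, ← neg_one_smul ℝ (truncKer k ε ⋆[.mul ℝ ℝ, μ] φ),
    ConvolutionExists.add_distrib (hφ.convolutionExists (hρi.smul _))
      (hφ.convolutionExists (hKρ.smul _)),
    ConvolutionExists.distrib_add (hcφ.convolutionExists hρi)
      (hKφ.convolutionExists hρi)]
  simp only [smul_convolution, convolution_smul, convolution_convolution_comm_left hK hρi hφ]

end IsLevyKernel

end LevyKernel

section SecondDifference

variable {E : Type*} [NormedAddCommGroup E] [NormedSpace ℝ E] {φ : E → ℝ}

lemma exists_abs_sub_sub_fderiv_le [FiniteDimensional ℝ E] (hφ : ContDiff ℝ 2 φ) (r : ℝ) :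
    ∃ C, 0 ≤ C ∧ ∀ x h : E, ‖x‖ ≤ r → ‖h‖ ≤ 1 →
      |φ (x + h) - φ x - fderiv ℝ φ x h| ≤ C * ‖h‖ ^ 2 := by
  have hd : ContDiff ℝ 1 (fderiv ℝ φ) := hφ.fderiv_right (by norm_num)
  obtain ⟨K, hK⟩ := hd.contDiffOn.exists_lipschitzOnWith (by norm_num)
    (convex_closedBall (0 : E) (r + 1)) (isCompact_closedBall _ _)
  refine ⟨K, K.2, fun x h hx hh => ?_⟩
  have hlip : ∀ y ∈ Metric.closedBall x ‖h‖, ‖fderiv ℝ φ y - fderiv ℝ φ x‖ ≤ K * ‖h‖ := by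
    intro y hy
    have hyx : ‖y - x‖ ≤ ‖h‖ := by rwa [← dist_eq_norm]
    refine (hK.norm_sub_le ?_ ?_).trans (by gcongr)
    · have := norm_add_le x (y - x)
      rw [add_sub_cancel] at this
      rw [mem_closedBall_zero_iff]
      linarith
    · rw [mem_closedBall_zero_iff]
      linarith
  have := (convex_closedBall x ‖h‖).norm_image_sub_le_of_norm_hasFDerivWithin_le' (y := x + h)
    (fun y _ => ((hφ.differentiable (by norm_num)) y).hasFDerivAt.hasFDerivWithinAt) hlip
    (Metric.mem_closedBall_self (norm_nonneg h)) (by simp)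
  simpa [pow_two, mul_assoc] using this

lemma exists_abs_second_difference_le [FiniteDimensional ℝ E] (hφ : ContDiff ℝ 2 φ) (r : ℝ) :
    ∃ C, 0 ≤ C ∧ ∀ x h : E, ‖x‖ ≤ r → ‖h‖ ≤ 1 →
      |2 * φ x - φ (x + h) - φ (x - h)| ≤ C * ‖h‖ ^ 2 := by
  obtain ⟨C, hC0, hC⟩ := exists_abs_sub_sub_fderiv_le hφ r
  refine ⟨2 * C, by positivity, fun x h hx hh => ?_⟩
  have hpos := hC x h hx hh
  have hneg := hC x (-h) hx (by rwa [norm_neg])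
  rw [norm_neg, map_neg, ← sub_eq_add_neg] at hneg
  rw [abs_le] at *
  constructor <;> linarith

end SecondDifference

section Symmetry

variable {E : Type*} [NormedAddCommGroup E] [NormedSpace ℝ E] [FiniteDimensional ℝ E]
  [MeasurableSpace E] [BorelSpace E] {μ : Measure E} [μ.IsAddHaarMeasure] {k ρ φ f w g : E → ℝ}

namespace IsLevyKernel

lemma truncOp_eq_integral_second_difference (hk : IsLevyKernel μ k) {ε : ℝ} (hε : 0 < ε)
    (hφ : IsBoundedContinuous φ) (x : E) :
    truncOp μ k ε φ x =
      (1 / 2) * ∫ h, truncKer k ε h * (2 * φ x - φ (x + h) - φ (x - h)) ∂μ := by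
  have hreflect : truncOp μ k ε φ x = ∫ h, truncKer k ε h * (φ x - φ (x + h)) ∂μ := by
    rw [truncOp, ← integral_neg_eq_self]
    simp only [hk.truncKer_neg, sub_neg_eq_add]
  have hint : ∀ u : E → E, Continuous u →
      Integrable (fun h => truncKer k ε h * (φ x - φ (u h))) μ := fun u hu =>
    ((hφ.comp continuous_const).sub (hφ.comp hu)).integrable_mul (hk.integrable_truncKer hε)
  have hsum : ∫ h, truncKer k ε h * (2 * φ x - φ (x + h) - φ (x - h)) ∂μ
      = truncOp μ k ε φ x + ∫ h, truncKer k ε h * (φ x - φ (x + h)) ∂μ := by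
    rw [truncOp, ← integral_add (hint _ (by fun_prop)) (hint _ (by fun_prop))]
    congr 1; ext h; ring
  rw [hsum, ← hreflect]; ring

lemma exists_abs_truncOp_le (hk : IsLevyKernel μ k) (hφ : ContDiff ℝ 2 φ)
    (hφb : IsBoundedContinuous φ) (r : ℝ) :
    ∃ C, ∀ x : E, ‖x‖ ≤ r → ∀ ε, 0 < ε → |truncOp μ k ε φ x| ≤ C := by
  obtain ⟨C, hC0, hC⟩ := exists_abs_second_difference_le hφ r
  obtain ⟨B, hB0, hB⟩ := hφb.exists_nonneg_bound
  refine ⟨(1 / 2) * ∫ h, (C + 4 * B) * (min 1 (‖h‖ ^ 2) * k h) ∂μ, fun x hx ε hε => ?_⟩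
  have hdiff : ∀ h, |2 * φ x - φ (x + h) - φ (x - h)| ≤ (C + 4 * B) * min 1 (‖h‖ ^ 2) := by
    intro h
    rcases le_total ‖h‖ 1 with hh | hh
    · rw [min_eq_right (by nlinarith [norm_nonneg h])]
      exact (hC x h hx hh).trans (by gcongr; linarith)
    · rw [min_eq_left (by nlinarith [norm_nonneg h]), mul_one]
      have hx := abs_le.1 (hB x)
      have hp := abs_le.1 (hB (x + h))
      have hm := abs_le.1 (hB (x - h))
      rw [abs_le]; constructor <;> linarith
  rw [hk.truncOp_eq_integral_second_difference hε hφb, abs_mul,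
    abs_of_pos (by norm_num : (0 : ℝ) < 1 / 2)]
  gcongr
  rw [← Real.norm_eq_abs]
  refine norm_integral_le_of_norm_le (hk.integrable.const_mul _) (.of_forall fun h => ?_)
  rw [norm_mul, Real.norm_of_nonneg (hk.truncKer_nonneg ε h), mul_comm, ← mul_assoc]
  exact mul_le_mul (hdiff h) (hk.truncKer_le ε h) (hk.truncKer_nonneg ε h) (by positivity)

lemma exists_integrable_bound_truncOp (hk : IsLevyKernel μ k) (hρ : ContDiff ℝ 2 ρ)
    (hρc : HasCompactSupport ρ) :
    ∃ H : E → ℝ, Integrable H μ ∧ ∀ x ε, 0 < ε → |truncOp μ k ε ρ x| ≤ H x := by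
  have hρb : IsBoundedContinuous ρ :=
    ⟨hρ.continuous, hρc.exists_bound_of_continuous hρ.continuous⟩
  obtain ⟨r, hr⟩ := hρc.isCompact.isBounded.subset_closedBall 0
  have hr0 : ∀ x, r < ‖x‖ → ρ x = 0 := fun x hx => by
    by_contra h
    exact hx.not_ge (mem_closedBall_zero_iff.1 (hr (subset_tsupport _ h)))
  obtain ⟨C, hC⟩ := hk.exists_abs_truncOp_le hρ hρb (r + 1)
  have hρi : Integrable (fun x => |ρ x|) μ :=
    (hρ.continuous.integrable_of_hasCompactSupport hρc).abs
  set J : E → ℝ := fun h => min 1 (‖h‖ ^ 2) * k h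
  refine ⟨fun x => (Metric.closedBall (0 : E) (r + 1)).indicator (fun _ => C) x +
    (J ⋆[.mul ℝ ℝ, μ] fun u => |ρ u|) x, ?_, fun x ε hε => ?_⟩
  · refine Integrable.add ?_ (hk.integrable.integrable_convolution (.mul ℝ ℝ) hρi)
    exact (integrable_indicator_iff measurableSet_closedBall).2
      (integrableOn_const measure_closedBall_lt_top.ne)
  beta_reduce
  rcases le_or_gt ‖x‖ (r + 1) with hx | hx
  · rw [Set.indicator_of_mem (mem_closedBall_zero_iff.2 hx)]
    have hconv : 0 ≤ (J ⋆[.mul ℝ ℝ, μ] fun u => |ρ u|) x :=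
      integral_nonneg fun h =>
        mul_nonneg (mul_nonneg (by positivity) (hk.nonneg h)) (abs_nonneg _)
    linarith [hC x hx ε hε]
  · rw [Set.indicator_of_notMem (by simpa using hx), zero_add]
    exact hk.abs_truncOp_le_of_support_subset hρb hr0 hx ε

end IsLevyKernel

lemma HasPV.tendsto_convolution_truncOp (hk : IsLevyKernel μ k) (hφf : HasPV μ k φ f)
    (hφ : ContDiff ℝ 2 φ) (hφb : IsBoundedContinuous φ) (hρ : Continuous ρ)
    (hρc : HasCompactSupport ρ) (x : E) :
    Tendsto (fun ε => (ρ ⋆[.mul ℝ ℝ, μ] truncOp μ k ε φ) x) (𝓝[>] 0)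
      (𝓝 ((ρ ⋆[.mul ℝ ℝ, μ] f) x)) := by
  obtain ⟨r, hr⟩ := hρc.isCompact.isBounded.subset_closedBall 0
  obtain ⟨C, hC⟩ := hk.exists_abs_truncOp_le hφ hφb (‖x‖ + r)
  have hρi : Integrable ρ μ := hρ.integrable_of_hasCompactSupport hρc
  refine tendsto_integral_filter_of_dominated_convergence (fun u => |ρ u| * C) ?_ ?_
    (hρi.abs.mul_const C) (.of_forall fun u => (hφf _).const_mul _)
  · filter_upwards [self_mem_nhdsWithin] with ε hε
    exact ((hk.isBoundedContinuous_truncOp hε hφb).convolutionExists hρi x).aestronglyMeasurable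
  · filter_upwards [self_mem_nhdsWithin] with ε hε
    refine .of_forall fun u => ?_
    rw [ContinuousLinearMap.mul_apply', norm_mul, Real.norm_eq_abs, Real.norm_eq_abs]
    by_cases hu : ρ u = 0
    · simp [hu]
    · have hur : ‖u‖ ≤ r := mem_closedBall_zero_iff.1 (hr (subset_tsupport _ hu))
      gcongr
      exact hC _ ((norm_sub_le _ _).trans (by gcongr)) ε hε

lemma HasPV.tendsto_integral_mul_truncOp_convolution (hk : IsLevyKernel μ k)
    (hφf : HasPV μ k φ f) (hφ : ContDiff ℝ 2 φ) (hφb : IsBoundedContinuous φ)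
    (hρ : ContDiff ℝ 2 ρ) (hρc : HasCompactSupport ρ) {H : E → ℝ} (hHi : Integrable H μ)
    (hH : ∀ x ε, 0 < ε → |truncOp μ k ε ρ x| ≤ H x) (hw : AEStronglyMeasurable w μ)
    (hwH : Integrable (fun x => w x * (H ⋆[.mul ℝ ℝ, μ] fun u => |φ u|) x) μ) :
    Tendsto (fun ε => ∫ x, w x * (truncOp μ k ε ρ ⋆[.mul ℝ ℝ, μ] φ) x ∂μ) (𝓝[>] 0)
      (𝓝 (∫ x, w x * (ρ ⋆[.mul ℝ ℝ, μ] f) x ∂μ)) := by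
  have hρi : Integrable ρ μ := hρ.continuous.integrable_of_hasCompactSupport hρc
  have hρb : IsBoundedContinuous ρ :=
    ⟨hρ.continuous, hρc.exists_bound_of_continuous hρ.continuous⟩
  refine tendsto_integral_filter_of_dominated_convergence _ ?_ ?_ hwH.norm
    (.of_forall fun x => Tendsto.const_mul _ ?_)
  · filter_upwards [self_mem_nhdsWithin] with ε hε
    rw [hk.truncOp_convolution hε hρb hρi hφb]
    have hconv := (hk.isBoundedContinuous_truncOp hε hφb).convolution hρi
    exact hw.mul hconv.continuous.aestronglyMeasurable
  · filter_upwards [self_mem_nhdsWithin] with ε hε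
    refine .of_forall fun x => ?_
    rw [norm_mul, norm_mul]
    refine mul_le_mul_of_nonneg_left (le_trans ?_ (Real.le_norm_self _)) (norm_nonneg _)
    refine norm_integral_le_of_norm_le (hφb.abs.convolutionExists hHi x) (.of_forall fun u => ?_)
    rw [ContinuousLinearMap.mul_apply', norm_mul]
    exact mul_le_mul_of_nonneg_right (hH u ε hε) (abs_nonneg _)
  · refine (hφf.tendsto_convolution_truncOp hk hφ hφb hρ.continuous hρc x).congr' ?_
    filter_upwards [self_mem_nhdsWithin] with ε hε
    rw [hk.truncOp_convolution hε hρb hρi hφb]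

lemma HasPV.integral_mul_convolution_eq (hk : IsLevyKernel μ k)
    (hφf : HasPV μ k φ f) (hφ : ContDiff ℝ 2 φ) (hφb : IsBoundedContinuous φ)
    (hwg : HasPV μ k w g) (hw : ContDiff ℝ 2 w) (hwb : IsBoundedContinuous w)
    (hwi : Integrable w μ) (hgi : Integrable g μ)
    (hρ : ContDiff ℝ 2 ρ) (hρc : HasCompactSupport ρ) (hρe : ∀ u, ρ (-u) = ρ u) :
    ∫ x, w x * (ρ ⋆[.mul ℝ ℝ, μ] f) x ∂μ = ∫ x, g x * (ρ ⋆[.mul ℝ ℝ, μ] φ) x ∂μ := by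
  obtain ⟨H, hHi, hH⟩ := hk.exists_integrable_bound_truncOp hρ hρc
  have hρi : Integrable ρ μ := hρ.continuous.integrable_of_hasCompactSupport hρc
  have hρb : IsBoundedContinuous ρ :=
    ⟨hρ.continuous, hρc.exists_bound_of_continuous hρ.continuous⟩
  have hwf := hφf.tendsto_integral_mul_truncOp_convolution hk hφ hφb hρ hρc hHi hH
    hwi.aestronglyMeasurable ((hφb.abs.convolution hHi).integrable_mul hwi)
  have hφg := hwg.tendsto_integral_mul_truncOp_convolution hk hw hwb hρ hρc hHi hH
    hφb.continuous.aestronglyMeasurable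
    (by simpa only [mul_comm] using
      hφb.integrable_mul (hHi.integrable_convolution (.mul ℝ ℝ) hwi.abs))
  rw [integral_mul_convolution_comm hρi hρe hgi hφb]
  refine tendsto_nhds_unique hwf (hφg.congr' ?_)
  filter_upwards [self_mem_nhdsWithin] with ε hε
  have hSi : Integrable (truncOp μ k ε ρ) μ :=
    hHi.mono' (hk.isBoundedContinuous_truncOp hε hρb).continuous.aestronglyMeasurable
      (.of_forall fun x => hH x ε hε)
  exact (integral_mul_convolution_comm hSi (hk.truncOp_neg hρe ε) hwi hφb).symm

lemma tendsto_integral_mul_bump_convolution (b : ℕ → ContDiffBump (0 : E))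
    (hb : Tendsto (fun i => (b i).rOut) atTop (𝓝 0)) (hw : Integrable w μ)
    (hf : IsBoundedContinuous f) :
    Tendsto (fun i => ∫ x, w x * ((b i).normed μ ⋆[.mul ℝ ℝ, μ] f) x ∂μ) atTop
      (𝓝 (∫ x, w x * f x ∂μ)) := by
  obtain ⟨B, hB⟩ := hf.bounded
  refine tendsto_integral_of_dominated_convergence (fun x => |w x| * B) (fun i => ?_)
    (hw.abs.mul_const _) (fun i => .of_forall fun x => ?_)
    (.of_forall fun x => Tendsto.const_mul _ ?_)
  · exact ((hf.convolution (b i).integrable_normed).integrable_mul hw).aestronglyMeasurable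
  · rw [norm_mul, Real.norm_eq_abs]
    gcongr
    refine (norm_integral_le_of_norm_le ((b i).integrable_normed.mul_const B)
      (.of_forall fun u => ?_)).trans_eq
      (by rw [integral_mul_const, (b i).integral_normed, one_mul])
    rw [ContinuousLinearMap.mul_apply', norm_mul, Real.norm_of_nonneg ((b i).nonneg_normed u)]
    exact mul_le_mul_of_nonneg_left (hB _) ((b i).nonneg_normed u)
  · exact ContDiffBump.convolution_tendsto_right_of_continuous hb hf.continuous x

theorem HasPV.integral_mul_eq (hk : IsLevyKernel μ k)
    (hφf : HasPV μ k φ f) (hφ : ContDiff ℝ 2 φ) (hφb : IsBoundedContinuous φ)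
    (hfb : IsBoundedContinuous f) (hwg : HasPV μ k w g) (hw : ContDiff ℝ 2 w)
    (hwb : IsBoundedContinuous w) (hwi : Integrable w μ) (hgi : Integrable g μ) :
    ∫ x, w x * f x ∂μ = ∫ x, g x * φ x ∂μ := by
  let b : ℕ → ContDiffBump (0 : E) := fun i =>
    ⟨1 / (2 * (i + 1)), 1 / (i + 1), by positivity, by gcongr; linarith⟩
  have hb : Tendsto (fun i => (b i).rOut) atTop (𝓝 0) := tendsto_one_div_add_atTop_nhds_zero_nat
  refine tendsto_nhds_unique (tendsto_integral_mul_bump_convolution b hb hwi hfb)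
    ((tendsto_integral_mul_bump_convolution b hb hgi hφb).congr fun i => ?_)
  exact (hφf.integral_mul_convolution_eq hk hφ hφb hwg hw hwb hwi hgi (b i).contDiff_normed
    (b i).hasCompactSupport_normed (b i).normed_neg).symm

end Symmetry

section Linearity

variable {E : Type*} [NormedAddCommGroup E] [MeasurableSpace E] {μ : Measure E}
  {k φ ψ f g : E → ℝ}

lemma HasPV.const_mul (h : HasPV μ k φ f) (c : ℝ) :
    HasPV μ k (fun x => c * φ x) (fun x => c * f x) := fun x => by
  refine ((h x).const_mul c).congr fun ε => ?_
  rw [truncOp, truncOp, ← integral_const_mul]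
  congr 1; ext; ring

variable [NormedSpace ℝ E] [FiniteDimensional ℝ E] [BorelSpace E]

lemma HasPV.add (hk : IsLevyKernel μ k) (hφf : HasPV μ k φ f) (hψg : HasPV μ k ψ g)
    (hφ : IsBoundedContinuous φ) (hψ : IsBoundedContinuous ψ) :
    HasPV μ k (fun x => φ x + ψ x) (fun x => f x + g x) := fun x => by
  refine ((hφf x).add (hψg x)).congr' ?_
  filter_upwards [self_mem_nhdsWithin] with ε hε
  have hint : ∀ {χ : E → ℝ}, IsBoundedContinuous χ →
      Integrable (fun h => truncKer k ε h * (χ x - χ (x - h))) μ := fun hχ =>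
    ((hχ.comp continuous_const).sub (hχ.comp (by fun_prop))).integrable_mul
      (hk.integrable_truncKer hε)
  rw [truncOp, truncOp, truncOp, ← integral_add (hint hφ) (hint hψ)]
  congr 1; ext; ring

end Linearity

section RieszKernel

open Module (finrank)

variable {E : Type*} [NormedAddCommGroup E] [NormedSpace ℝ E] {γ : ℝ}

/-- The kernel `|h|^{-(d+2γ)}`, `d = dim E`, of the fractional Laplacian of order `2γ`. -/
noncomputable def rieszKer (γ : ℝ) (h : E) : ℝ :=
  (‖h‖ ^ (finrank ℝ E + 2 * γ))⁻¹

lemma rieszKer_eq_mul_smul {r : ℝ} (hr : 0 < r) (h : E) :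
    rieszKer γ h = r ^ (2 * γ) * r ^ finrank ℝ E * rieszKer γ (r • h) := by
  rw [rieszKer, rieszKer, norm_smul, Real.norm_of_nonneg hr.le, Real.mul_rpow hr.le (norm_nonneg _),
    ← Real.rpow_natCast, ← Real.rpow_add hr, mul_inv, add_comm (2 * γ),
    mul_inv_cancel_left₀ (by positivity)]

lemma truncKer_rieszKer_eq_mul_smul {r : ℝ} (hr : 0 < r) (ε : ℝ) (h : E) :
    truncKer (rieszKer γ) ε h
      = r ^ (2 * γ) * r ^ finrank ℝ E * truncKer (rieszKer γ) (r * ε) (r • h) := by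
  simp only [truncKer, Set.indicator_apply, Set.mem_ofPred_eq, norm_smul, Real.norm_eq_abs,
    abs_of_pos hr, mul_lt_mul_iff_right₀ hr]
  split_ifs
  · exact rieszKer_eq_mul_smul hr h
  · rw [mul_zero]

lemma integrableOn_min_one_sq_mul_rpow (hγ0 : 0 < γ) (hγ1 : γ < 1) :
    IntegrableOn (fun r : ℝ => min 1 (r ^ 2) * r ^ (-1 - 2 * γ)) (Set.Ioi 0) := by
  rw [← Set.Ioc_union_Ioi_eq_Ioi zero_le_one, integrableOn_union]
  constructor
  · have hint : IntegrableOn (fun r : ℝ => r ^ (1 - 2 * γ)) (Set.Ioc 0 1) :=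
      (intervalIntegrable_iff_integrableOn_Ioc_of_le zero_le_one).1
        (intervalIntegral.intervalIntegrable_rpow' (by linarith))
    refine hint.congr_fun (fun r hr => ?_) measurableSet_Ioc
    have hr1 : r ^ 2 ≤ 1 := by nlinarith [hr.1, hr.2]
    beta_reduce
    rw [min_eq_right hr1, ← Real.rpow_natCast r 2, ← Real.rpow_add hr.1]
    congr 1; push_cast; ring
  · refine (integrableOn_Ioi_rpow_of_lt (a := -1 - 2 * γ) (by linarith) one_pos).congr_fun
      (fun r hr => ?_) measurableSet_Ioi
    have hr1 : 1 ≤ r ^ 2 := by nlinarith [Set.mem_Ioi.1 hr]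
    beta_reduce
    rw [min_eq_left hr1, one_mul]

variable [FiniteDimensional ℝ E] [MeasurableSpace E] [BorelSpace E] {μ : Measure E}
  [μ.IsAddHaarMeasure] {φ f : E → ℝ}

lemma isLevyKernel_rieszKer [Nontrivial E] (hγ0 : 0 < γ) (hγ1 : γ < 1) :
    IsLevyKernel μ (rieszKer γ) where
  nonneg h := by unfold rieszKer; positivity
  even h := by simp only [rieszKer, norm_neg]
  measurable := by unfold rieszKer; fun_prop
  integrable := by
    refine (integrable_fun_norm_addHaar μ
      (f := fun r => min 1 (r ^ 2) * (r ^ (finrank ℝ E + 2 * γ))⁻¹)).2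
      ((integrableOn_min_one_sq_mul_rpow hγ0 hγ1).congr_fun (fun r hr => ?_) measurableSet_Ioi)
    have hr : 0 < r := hr
    have hdim : ((finrank ℝ E - 1 : ℕ) : ℝ) = finrank ℝ E - 1 := by
      rw [Nat.cast_sub Module.finrank_pos, Nat.cast_one]
    rw [smul_eq_mul, mul_left_comm, ← Real.rpow_natCast r (_ - 1), ← Real.rpow_neg hr.le,
      ← Real.rpow_add hr, hdim]
    ring_nf

lemma truncOp_rieszKer_comp_affine (φ : E → ℝ) {r : ℝ} (hr : 0 < r) (ξ x : E) (ε : ℝ) :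
    truncOp μ (rieszKer γ) ε (fun x => φ (r • (x - ξ))) x =
      r ^ (2 * γ) * truncOp μ (rieszKer γ) (r * ε) φ (r • (x - ξ)) := by
  have hcov := Measure.integral_comp_smul μ
    (fun h => truncKer (rieszKer γ) (r * ε) h * (φ (r • (x - ξ)) - φ (r • (x - ξ) - h))) r
  rw [abs_of_pos (by positivity), smul_eq_mul, eq_inv_mul_iff_mul_eq₀ (by positivity)] at hcov
  rw [truncOp, truncOp, ← hcov, ← mul_assoc, ← integral_const_mul]
  congr 1; ext h
  have hshift : r • (x - h - ξ) = r • (x - ξ) - r • h := by rw [← smul_sub, sub_right_comm]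
  rw [hshift, truncKer_rieszKer_eq_mul_smul hr, mul_assoc]

lemma HasPV.comp_affine (h : HasPV μ (rieszKer γ) φ f) {r : ℝ} (hr : 0 < r) (ξ : E) :
    HasPV μ (rieszKer γ) (fun x => φ (r • (x - ξ)))
      (fun x => r ^ (2 * γ) * f (r • (x - ξ))) := fun x => by
  simp only [truncOp_rieszKer_comp_affine φ hr]
  refine ((h _).comp ?_).const_mul _
  have hlim : Tendsto (fun ε : ℝ => r * ε) (𝓝 0) (𝓝 0) := by
    simpa using (continuous_const_mul r).tendsto 0
  refine tendsto_nhdsWithin_iff.2 ⟨hlim.mono_left nhdsWithin_le_nhds, ?_⟩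
  filter_upwards [self_mem_nhdsWithin] with ε hε using mul_pos hr hε

end RieszKernel

section Decay

variable {E : Type*} [NormedAddCommGroup E]

/-- The bubble profile `(1 + |x|²)^{-r}`. -/
noncomputable def decay (r : ℝ) (x : E) : ℝ :=
  (1 + ‖x‖ ^ 2) ^ (-r)

lemma decay_pos (r : ℝ) (x : E) : 0 < decay r x := by
  unfold decay; positivity

lemma decay_add (r s : ℝ) (x : E) : decay (r + s) x = decay r x * decay s x := by
  rw [decay, neg_add, Real.rpow_add (by positivity)]; rfl

lemma decay_rpow (r a : ℝ) (x : E) : decay r x ^ a = decay (r * a) x := by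
  rw [decay, ← Real.rpow_mul (by positivity), neg_mul]; rfl

lemma measurable_decay [MeasurableSpace E] [BorelSpace E] (r : ℝ) :
    Measurable (decay r : E → ℝ) := by
  unfold decay; fun_prop

lemma isBoundedContinuous_decay {r : ℝ} (hr : 0 ≤ r) :
    IsBoundedContinuous (decay r : E → ℝ) where
  continuous := .rpow_const (by fun_prop) fun x => .inl (by positivity)
  bounded := ⟨1, fun x => by
    rw [abs_of_pos (decay_pos r x)]
    exact Real.rpow_le_one_of_one_le_of_nonpos (by simp) (by linarith)⟩

lemma integrable_decay [NormedSpace ℝ E] [FiniteDimensional ℝ E] [MeasurableSpace E]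
    [BorelSpace E] {μ : Measure E} [μ.IsAddHaarMeasure] {r : ℝ}
    (hr : Module.finrank ℝ E < 2 * r) : Integrable (decay r) μ := by
  unfold decay
  simpa [neg_div] using integrable_rpow_neg_one_add_norm_sq (μ := μ) hr

end Decay

section Quadratic

variable {E : Type*} [NormedAddCommGroup E] [InnerProductSpace ℝ E]

/-- The quadratic polynomial `a|x|² + 2⟨b, x⟩ + c` with coefficients `q = (a, b, c)`. -/
noncomputable def quad (q : ℝ × E × ℝ) (x : E) : ℝ :=
  q.1 * ‖x‖ ^ 2 + 2 * inner ℝ q.2.1 x + q.2.2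

/-- The discriminant `ac - |b|²` of the quadratic polynomial `quad (a, b, c)`. -/
noncomputable def discr (q : ℝ × E × ℝ) : ℝ :=
  q.1 * q.2.2 - ‖q.2.1‖ ^ 2

lemma contDiff_quad (q : ℝ × E × ℝ) {m : WithTop ℕ∞} : ContDiff ℝ m (quad q) :=
  ((contDiff_const.mul (contDiff_norm_sq ℝ)).add
    (contDiff_const.mul (contDiff_const.inner ℝ contDiff_id))).add contDiff_const

lemma quad_eq_mul_one_add_norm_sq {q : ℝ × E × ℝ} (ha : 0 < q.1) (hD : 0 < discr q) (x : E) :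
    quad q x = discr q / q.1 *
      (1 + ‖(q.1 / √(discr q)) • (x - (-q.1⁻¹) • q.2.1)‖ ^ 2) := by
  have hsq : ‖x - (-q.1⁻¹) • q.2.1‖ ^ 2
      = ‖x‖ ^ 2 + 2 * q.1⁻¹ * inner ℝ q.2.1 x + q.1⁻¹ ^ 2 * ‖q.2.1‖ ^ 2 := by
    rw [neg_smul, sub_neg_eq_add, norm_add_sq_real, inner_smul_right, real_inner_comm, norm_smul,
      mul_pow, Real.norm_eq_abs, sq_abs]
    ring
  rw [norm_smul, mul_pow, hsq, Real.norm_eq_abs, sq_abs, div_pow, Real.sq_sqrt hD.le, quad]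
  field_simp
  rw [discr]
  ring

lemma quad_pos {q : ℝ × E × ℝ} (ha : 0 < q.1) (hD : 0 < discr q) (x : E) : 0 < quad q x := by
  rw [quad_eq_mul_one_add_norm_sq ha hD]; positivity

lemma discr_rpow_mul_div_rpow {a D : ℝ} (ha : 0 < a) (hD : 0 < D) (s γ : ℝ) :
    D ^ γ * (D / a) ^ (-(s + 2 * γ)) = (D / a) ^ (-s) * (a / √D) ^ (2 * γ) := by
  rw [neg_add, Real.rpow_add (by positivity), Real.div_rpow ha.le (by positivity),
    Real.sqrt_eq_rpow, ← Real.rpow_mul hD.le, Real.div_rpow hD.le ha.le (-(2 * γ)),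
    Real.rpow_neg ha.le, Real.rpow_neg hD.le, show 1 / 2 * (2 * γ) = γ by ring,
    show D ^ (2 * γ) = D ^ γ * D ^ γ by rw [← Real.rpow_add hD]; ring_nf]
  field_simp

variable [FiniteDimensional ℝ E] [MeasurableSpace E] [BorelSpace E] {μ : Measure E}
  [μ.IsAddHaarMeasure]

-- Every quadratic polynomial of positive discriminant is an affine image of `1 + |x|²`.
lemma HasPV.quad_rpow {γ s κ : ℝ}
    (h : HasPV μ (rieszKer γ) (decay s) (fun x => κ * decay (s + 2 * γ) x))
    {q : ℝ × E × ℝ} (ha : 0 < q.1) (hD : 0 < discr q) :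
    HasPV μ (rieszKer γ) (fun x => quad q x ^ (-s))
      (fun x => κ * (discr q ^ γ * quad q x ^ (-(s + 2 * γ)))) := by
  have hr : 0 < q.1 / √(discr q) := by positivity
  have hDa : 0 < discr q / q.1 := by positivity
  convert (h.comp_affine hr ((-q.1⁻¹) • q.2.1)).const_mul ((discr q / q.1) ^ (-s)) using 2 with x x
  · rw [quad_eq_mul_one_add_norm_sq ha hD, Real.mul_rpow hDa.le (by positivity), decay]
  · rw [quad_eq_mul_one_add_norm_sq ha hD, Real.mul_rpow hDa.le (by positivity), decay]
    linear_combination κ * (1 + ‖(q.1 / √(discr q)) • (x - (-q.1⁻¹) • q.2.1)‖ ^ 2)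
      ^ (-(s + 2 * γ)) * discr_rpow_mul_div_rpow ha hD s γ

end Quadratic

section Binomial

open scoped Nat

lemma factorial_mul_choose_neg (s : ℝ) (k : ℕ) :
    k ! * Ring.choose (-s) k = (-1) ^ k * ∏ j ∈ Finset.range k, (s + j) := by
  have h := Ring.descPochhammer_eq_factorial_smul_choose (-s) k
  rw [nsmul_eq_mul, ← Polynomial.aeval_eq_smeval, Polynomial.aeval_def, ← Polynomial.eval_map,
    descPochhammer_map, descPochhammer_eval_eq_prod_range] at h
  calc k ! * Ring.choose (-s) k = ∏ j ∈ Finset.range k, (-1) * (s + j) := by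
        rw [← h]; exact Finset.prod_congr rfl fun j _ => by ring
    _ = (-1) ^ k * ∏ j ∈ Finset.range k, (s + j) := by
        rw [Finset.prod_mul_distrib, Finset.prod_const, Finset.card_range]

lemma mul_choose_neg_ne {s r : ℝ} (hs : 0 < s) (hr : s < r) {k : ℕ} (hk : 2 ≤ k) :
    s * Ring.choose (-r) k ≠ r * Ring.choose (-s) k := by
  obtain ⟨j, rfl⟩ := Nat.exists_eq_add_of_le' hk
  intro h
  have hprod : ∏ i ∈ Finset.range (j + 1), (s + (i + 1 : ℕ)) <
      ∏ i ∈ Finset.range (j + 1), (r + (i + 1 : ℕ)) :=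
    Finset.prod_lt_prod_of_nonempty (fun i _ => by positivity) (fun i _ => by gcongr) (by simp)
  have hmul : (-1) ^ (j + 2) * (s * r) * ∏ i ∈ Finset.range (j + 1), (s + (i + 1 : ℕ)) =
      (-1) ^ (j + 2) * (s * r) * ∏ i ∈ Finset.range (j + 1), (r + (i + 1 : ℕ)) := by
    have hs' := factorial_mul_choose_neg s (j + 2)
    have hr' := factorial_mul_choose_neg r (j + 2)
    rw [Finset.prod_range_succ', Nat.cast_zero, add_zero] at hs' hr'
    linear_combination s * hr' - r * hs' - (j + 2)! * h
  have hr0 : r ≠ 0 := (hs.trans hr).ne'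
  exact hprod.ne (mul_left_cancel₀ (by simp [hs.ne', hr0]) hmul)

lemma isBigO_one_add_rpow_sub (a : ℝ) (k : ℕ) :
    (fun x : ℝ => (1 + x) ^ a - ∑ j ∈ Finset.range k, Ring.choose a j * x ^ j)
      =O[𝓝 0] fun x => x ^ k := by
  have h := (Real.one_add_rpow_hasFPowerSeriesAt_zero (a := a)).isBigO_sub_partialSum_pow k
  simp only [zero_add, FormalMultilinearSeries.partialSum, binomialSeries_apply, List.ofFn_const,
    List.prod_replicate, smul_eq_mul, ← norm_pow] at h
  exact h.of_norm_right

end Binomial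

lemma eq_zero_of_tendsto_div_pow_of_eq_two_mul_half {F : ℝ → ℝ} {a : ℝ} {k : ℕ} (hk : 2 ≤ k)
    (hF : Tendsto (fun t => F t / t ^ k) (𝓝[≠] 0) (𝓝 a))
    (h : ∀ᶠ t in 𝓝[≠] 0, F t = 2 * F (t / 2)) : a = 0 := by
  have hhalf : Tendsto (fun t : ℝ => t / 2) (𝓝[≠] 0) (𝓝[≠] 0) := by
    refine tendsto_nhdsWithin_iff.2 ⟨?_, ?_⟩
    · simpa using ((continuous_id.div_const (2 : ℝ)).tendsto 0).mono_left nhdsWithin_le_nhds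
    · filter_upwards [self_mem_nhdsWithin] with t ht using div_ne_zero ht two_ne_zero
  have hlim : Tendsto (fun t => F t / t ^ k) (𝓝[≠] 0) (𝓝 (2 * (1 / 2) ^ k * a)) := by
    refine ((hF.comp hhalf).const_mul _).congr' ?_
    filter_upwards [h] with t ht
    rw [Function.comp_apply, ht, div_pow, div_pow, one_pow]
    field_simp
  have hpow : (1 / 2 : ℝ) ^ k ≤ (1 / 2) ^ 2 := pow_le_pow_of_le_one (by norm_num) (by norm_num) hk
  have heq := tendsto_nhds_unique hF hlim
  have hne : 1 - 2 * (1 / 2 : ℝ) ^ k ≠ 0 := by linarith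
  exact (mul_eq_zero.1 (show (1 - 2 * (1 / 2 : ℝ) ^ k) * a = 0 by linarith)).resolve_left hne

lemma eventually_forall_mul {X : Type*} {v : X → ℝ} (hv : ∃ R, ∀ x, |v x| ≤ R) {P : ℝ → Prop}
    (hP : ∀ᶠ y in 𝓝 0, P y) : ∀ᶠ t : ℝ in 𝓝 0, ∀ x, P (t * v x) := by
  obtain ⟨R, hR⟩ := hv
  obtain ⟨δ, hδ, hball⟩ := Metric.eventually_nhds_iff.1 hP
  have hlim : Tendsto (fun t : ℝ => |t| * |R|) (𝓝 0) (𝓝 0) :=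
    Continuous.tendsto' (by fun_prop) _ _ (by simp)
  filter_upwards [hlim.eventually_lt_const hδ] with t ht x
  refine hball ?_
  calc dist (t * v x) 0 = |t| * |v x| := by rw [dist_zero_right, Real.norm_eq_abs, abs_mul]
    _ ≤ |t| * |R| := mul_le_mul_of_nonneg_left ((hR x).trans (le_abs_self R)) (abs_nonneg t)
    _ < δ := ht

lemma exists_eventually_norm_mul_comp_mul_le {X : Type*} {v : X → ℝ} (hv : ∃ R, ∀ x, |v x| ≤ R)
    {f : ℝ → ℝ} {k : ℕ} (hf : f =O[𝓝 0] fun y => y ^ k) (ψ : X → ℝ) :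
    ∃ C, ∀ᶠ t : ℝ in 𝓝 0, ∀ x, ‖ψ x * f (t * v x)‖ ≤ ‖ψ x * v x ^ k‖ * (C * ‖t ^ k‖) := by
  obtain ⟨C, hC⟩ := hf.bound
  refine ⟨C, ?_⟩
  filter_upwards [eventually_forall_mul hv hC] with t ht x
  calc ‖ψ x * f (t * v x)‖ ≤ ‖ψ x‖ * (C * ‖(t * v x) ^ k‖) := by
        rw [norm_mul]; exact mul_le_mul_of_nonneg_left (ht x) (norm_nonneg _)
    _ = ‖ψ x * v x ^ k‖ * (C * ‖t ^ k‖) := by rw [mul_pow, norm_mul, norm_mul]; ring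

section Moments

variable {X : Type*} [MeasurableSpace X] {ν : Measure X} {ψ v : X → ℝ}

lemma isBigO_integral_mul_comp_mul (hv : ∃ R, ∀ x, |v x| ≤ R) {f : ℝ → ℝ} {k : ℕ}
    (hf : f =O[𝓝 0] fun y => y ^ k) (hψv : Integrable (fun x => ψ x * v x ^ k) ν) :
    (fun t : ℝ => ∫ x, ψ x * f (t * v x) ∂ν) =O[𝓝 0] fun t => t ^ k := by
  obtain ⟨C, hC⟩ := exists_eventually_norm_mul_comp_mul_le hv hf ψ
  refine .of_bound ((∫ x, ‖ψ x * v x ^ k‖ ∂ν) * C) ?_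
  filter_upwards [hC] with t ht
  refine (norm_integral_le_of_norm_le (hψv.norm.mul_const _) (.of_forall ht)).trans_eq ?_
  rw [integral_mul_const, mul_assoc]

lemma eventually_integrable_mul_comp_mul (hv : ∃ R, ∀ x, |v x| ≤ R) (hvm : Measurable v)
    (hψ : AEStronglyMeasurable ψ ν) {f : ℝ → ℝ} (hfm : Measurable f) {k : ℕ}
    (hf : f =O[𝓝 0] fun y => y ^ k) (hψv : Integrable (fun x => ψ x * v x ^ k) ν) :
    ∀ᶠ t : ℝ in 𝓝 0, Integrable (fun x => ψ x * f (t * v x)) ν := by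
  obtain ⟨C, hC⟩ := exists_eventually_norm_mul_comp_mul_le hv hf ψ
  filter_upwards [hC] with t ht
  exact (hψv.norm.mul_const _).mono'
    (hψ.mul (Measurable.aestronglyMeasurable (by fun_prop))) (.of_forall ht)

lemma eventually_integrable_mul_one_add_rpow (hψ : Integrable ψ ν) (hvm : Measurable v)
    (hv : ∃ R, ∀ x, |v x| ≤ R) (a : ℝ) :
    ∀ᶠ t : ℝ in 𝓝 0, Integrable (fun x => ψ x * (1 + t * v x) ^ a) ν :=
  eventually_integrable_mul_comp_mul (f := fun y => (1 + y) ^ a) (k := 0) hv hvm hψ.1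
    (by fun_prop) (by simpa using isBigO_one_add_rpow_sub a 0) (by simpa using hψ)

lemma integrable_mul_pow (hψ : Integrable ψ ν) (hvm : Measurable v) (hv : ∃ R, ∀ x, |v x| ≤ R)
    (j : ℕ) : Integrable (fun x => ψ x * v x ^ j) ν := by
  obtain ⟨R, hR⟩ := hv
  exact hψ.mul_bdd (c := R ^ j) (by fun_prop) (.of_forall fun x => by
    rw [norm_pow]; exact pow_le_pow_left₀ (abs_nonneg _) (hR x) j)

lemma isBigO_integral_one_add_rpow_sub (hψ : Integrable ψ ν) (hvm : Measurable v)
    (hv : ∃ R, ∀ x, |v x| ≤ R) (a : ℝ) (k : ℕ) :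
    (fun t : ℝ => ∫ x, ψ x * (1 + t * v x) ^ a ∂ν -
      ∑ j ∈ Finset.range k, Ring.choose a j * t ^ j * ∫ x, ψ x * v x ^ j ∂ν)
      =O[𝓝 0] fun t => t ^ k := by
  refine (isBigO_integral_mul_comp_mul hv (isBigO_one_add_rpow_sub a k)
    (integrable_mul_pow hψ hvm hv k)).congr' ?_ .rfl
  filter_upwards [eventually_integrable_mul_one_add_rpow hψ hvm hv a] with t ht
  have hterm (j : ℕ) : Integrable (fun x => Ring.choose a j * t ^ j * (ψ x * v x ^ j)) ν :=
    (integrable_mul_pow hψ hvm hv j).const_mul _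
  have hexpand (x : X) : ψ x * ((1 + t * v x) ^ a - ∑ j ∈ Finset.range k,
      Ring.choose a j * (t * v x) ^ j) = ψ x * (1 + t * v x) ^ a -
      ∑ j ∈ Finset.range k, Ring.choose a j * t ^ j * (ψ x * v x ^ j) := by
    rw [mul_sub, Finset.mul_sum]
    exact congrArg _ (Finset.sum_congr rfl fun j _ => by ring)
  simp_rw [hexpand]
  rw [integral_sub ht (integrable_finsetSum _ fun j _ => hterm j),
    integral_finsetSum _ fun j _ => hterm j]
  simp_rw [integral_const_mul]

lemma hasDerivAt_integral_one_add_rpow (hψ : Integrable ψ ν) (hvm : Measurable v)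
    (hv : ∃ R, ∀ x, |v x| ≤ R) (a : ℝ) :
    HasDerivAt (fun t : ℝ => ∫ x, ψ x * (1 + t * v x) ^ a ∂ν) (a * ∫ x, ψ x * v x ∂ν) 0 := by
  rw [hasDerivAt_iff_isLittleO_nhds_zero]
  refine ((isBigO_integral_one_add_rpow_sub hψ hvm hv a 2).congr_left fun t => ?_).trans_isLittleO
    (Asymptotics.isLittleO_pow_id one_lt_two)
  simp [Finset.sum_range_succ]; ring

lemma tendsto_integral_one_add_rpow_div_pow (hψ : Integrable ψ ν) (hvm : Measurable v)
    (hv : ∃ R, ∀ x, |v x| ≤ R) (a : ℝ) {k : ℕ} (hm : ∀ j < k, ∫ x, ψ x * v x ^ j ∂ν = 0) :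
    Tendsto (fun t : ℝ => (∫ x, ψ x * (1 + t * v x) ^ a ∂ν) / t ^ k) (𝓝[≠] 0)
      (𝓝 (Ring.choose a k * ∫ x, ψ x * v x ^ k ∂ν)) := by
  have hsum (t : ℝ) : ∑ j ∈ Finset.range (k + 1), Ring.choose a j * t ^ j * ∫ x, ψ x * v x ^ j ∂ν =
      (Ring.choose a k * ∫ x, ψ x * v x ^ k ∂ν) * t ^ k := by
    rw [Finset.sum_range_succ, Finset.sum_eq_zero fun j hj => by
      rw [hm j (Finset.mem_range.1 hj), mul_zero]]
    ring
  have hlittle := (isBigO_integral_one_add_rpow_sub hψ hvm hv a (k + 1)).trans_isLittleO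
    (Asymptotics.isLittleO_pow_pow (𝕜 := ℝ) k.lt_succ_self)
  refine tendsto_sub_nhds_zero_iff.1 ((hlittle.tendsto_div_nhds_zero.mono_left
    nhdsWithin_le_nhds).congr' ?_)
  filter_upwards [self_mem_nhdsWithin] with t ht
  rw [hsum, sub_div, mul_div_cancel_right₀ _ (pow_ne_zero k ht)]

lemma hasSum_integral_mul_cexp (hψ : Integrable ψ ν) (hvm : Measurable v)
    (hv : ∃ R, ∀ x, |v x| ≤ R) :
    HasSum (fun k : ℕ => ∫ x, (ψ x : ℂ) * ((v x * Complex.I) ^ k / k.factorial) ∂ν)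
      (∫ x, (ψ x : ℂ) * Complex.exp (v x * Complex.I) ∂ν) := by
  obtain ⟨R, hR⟩ := hv
  refine hasSum_integral_of_dominated_convergence
    (fun k x => |ψ x| * (R ^ k / k.factorial)) (fun k => ?_) (fun k => .of_forall fun x => ?_)
    (.of_forall fun x => (Real.summable_pow_div_factorial R).mul_left _) ?_
    (.of_forall fun x => ?_)
  · exact hψ.ofReal.1.mul (Measurable.aestronglyMeasurable (by fun_prop))
  · have hpow : |v x| ^ k ≤ R ^ k := pow_le_pow_left₀ (abs_nonneg _) (hR x) k
    simp only [norm_mul, norm_div, norm_pow, Complex.norm_real, Complex.norm_I, mul_one,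
      Real.norm_eq_abs, Complex.norm_natCast]
    gcongr
  · simp only [tsum_mul_left]
    exact hψ.abs.mul_const _
  · rw [Complex.exp_eq_exp_ℂ]
    exact (NormedSpace.expSeries_div_hasSum_exp (v x * Complex.I)).mul_left _

lemma integral_mul_cexp_eq_zero_of_moments (hψ : Integrable ψ ν) (hvm : Measurable v)
    (hv : ∃ R, ∀ x, |v x| ≤ R) (hm : ∀ k : ℕ, ∫ x, ψ x * v x ^ k ∂ν = 0) :
    ∫ x, (ψ x : ℂ) * Complex.exp (v x * Complex.I) ∂ν = 0 := by
  refine (hasSum_integral_mul_cexp hψ hvm hv).unique (hasSum_zero.congr_fun fun k => ?_)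
  calc ∫ x, (ψ x : ℂ) * ((v x * Complex.I) ^ k / k.factorial) ∂ν
      = ∫ x, ((ψ x * v x ^ k : ℝ) : ℂ) * (Complex.I ^ k / k.factorial) ∂ν := by
        congr 1; ext x; push_cast; ring
    _ = 0 := by rw [integral_mul_const, integral_complex_ofReal, hm k]; simp

lemma integral_withDensity_ofReal {η : X → ℝ} (hη : AEMeasurable η ν) (g : X → ℂ) :
    ∫ x, g x ∂ν.withDensity (fun x => ENNReal.ofReal (η x)) =
      ∫ x, ((max (η x) 0 : ℝ) : ℂ) * g x ∂ν := by
  rw [integral_withDensity_eq_integral_toReal_smul₀ hη.ennreal_ofReal (by simp)]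
  simp only [ENNReal.toReal_ofReal', Complex.real_smul]

lemma ae_eq_zero_of_withDensity_ofReal_eq (hψ : Integrable ψ ν)
    (h : (ν.withDensity fun x => ENNReal.ofReal (ψ x)) =
      ν.withDensity fun x => ENNReal.ofReal ((-ψ) x)) : ψ =ᵐ[ν] 0 := by
  rw [withDensity_eq_iff hψ.1.aemeasurable.ennreal_ofReal
    hψ.neg.1.aemeasurable.ennreal_ofReal hψ.lintegral_lt_top.ne] at h
  filter_upwards [h] with x hx
  have hmax := congrArg ENNReal.toReal hx
  rw [ENNReal.toReal_ofReal', ENNReal.toReal_ofReal'] at hmax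
  rw [Pi.zero_apply, ← max_zero_sub_max_neg_zero_eq_self (ψ x), hmax, Pi.neg_apply, sub_self]

-- Fourier transforms determine finite measures: compare the push-forwards of `ψ⁺ν` and `ψ⁻ν`.
lemma ae_eq_zero_of_integral_mul_cexp_eq_zero {F : Type*} [NormedAddCommGroup F] [NormedSpace ℝ F]
    [CompleteSpace F] [SecondCountableTopology F] [MeasurableSpace F] [BorelSpace F]
    (hψ : Integrable ψ ν) {T : X → F} (hT : MeasurableEmbedding T)
    (h : ∀ L : StrongDual ℝ F, ∫ x, (ψ x : ℂ) * Complex.exp (L (T x) * Complex.I) ∂ν = 0) :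
    ψ =ᵐ[ν] 0 := by
  have := isFiniteMeasure_withDensity_ofReal hψ.2
  have := isFiniteMeasure_withDensity_ofReal hψ.neg.2
  have hmeas (L : StrongDual ℝ F) : Measurable fun x => Complex.exp (L (T x) * Complex.I) := by
    have := hT.measurable
    fun_prop
  have hchar {η : X → ℝ} (hη : Integrable η ν) (L : StrongDual ℝ F) :
      charFunDual ((ν.withDensity fun x => ENNReal.ofReal (η x)).map T) L =
        ∫ x, ((max (η x) 0 : ℝ) : ℂ) * Complex.exp (L (T x) * Complex.I) ∂ν := by
    rw [charFunDual_apply, integral_map hT.measurable.aemeasurable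
      (Measurable.aestronglyMeasurable (by fun_prop)),
      integral_withDensity_ofReal hη.1.aemeasurable]
  have hint {η : X → ℝ} (hη : Integrable η ν) (L : StrongDual ℝ F) :
      Integrable (fun x => ((max (η x) 0 : ℝ) : ℂ) * Complex.exp (L (T x) * Complex.I)) ν :=
    hη.pos_part.ofReal.mul_bdd (c := 1) (hmeas L).aestronglyMeasurable
      (.of_forall fun x => (Complex.norm_exp_ofReal_mul_I _).le)
  have hmap : (ν.withDensity fun x => ENNReal.ofReal (ψ x)).map T =
      (ν.withDensity fun x => ENNReal.ofReal ((-ψ) x)).map T := by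
    refine Measure.ext_of_charFunDual (funext fun L => ?_)
    rw [hchar hψ, hchar hψ.neg, ← sub_eq_zero, ← integral_sub (hint hψ L) (hint hψ.neg L), ← h L]
    congr 1; ext x
    rw [← sub_mul, ← Complex.ofReal_sub, Pi.neg_apply, max_zero_sub_max_neg_zero_eq_self]
  have heq := congrArg (Measure.comap T) hmap
  rw [hT.comap_map, hT.comap_map] at heq
  exact ae_eq_zero_of_withDensity_ofReal_eq hψ heq

end Moments

section QuadRatio

variable {E : Type*} [NormedAddCommGroup E] [InnerProductSpace ℝ E]

/-- The quadratic polynomial `quad q` relative to `1 + |x|²`. -/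
noncomputable def quadRatio (q : ℝ × E × ℝ) (x : E) : ℝ :=
  quad q x / (1 + ‖x‖ ^ 2)

lemma quadRatio_add (q q' : ℝ × E × ℝ) (x : E) :
    quadRatio (q + q') x = quadRatio q x + quadRatio q' x := by
  simp only [quadRatio, quad, Prod.fst_add, Prod.snd_add, inner_add_left]
  ring

lemma quadRatio_smul (t : ℝ) (q : ℝ × E × ℝ) (x : E) :
    quadRatio (t • q) x = t * quadRatio q x := by
  simp only [quadRatio, quad, Prod.smul_fst, Prod.smul_snd, real_inner_smul_left, smul_eq_mul]
  ring

lemma isBoundedContinuous_quadRatio (q : ℝ × E × ℝ) : IsBoundedContinuous (quadRatio q) where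
  continuous := (contDiff_quad q (m := 0)).continuous.div (by fun_prop) fun x => by positivity
  bounded := by
    refine ⟨|q.1| + ‖q.2.1‖ + |q.2.2|, fun x => ?_⟩
    have hpos : 0 < 1 + ‖x‖ ^ 2 := by positivity
    have hquad : |quad q x| ≤ |q.1| * ‖x‖ ^ 2 + 2 * (‖q.2.1‖ * ‖x‖) + |q.2.2| := by
      refine (abs_add_three _ _ _).trans ?_
      rw [abs_mul, abs_mul, abs_two, abs_of_nonneg (sq_nonneg ‖x‖)]
      gcongr
      exact abs_real_inner_le_norm _ x
    rw [quadRatio, abs_div, abs_of_pos hpos, div_le_iff₀ hpos]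
    nlinarith [abs_nonneg q.1, mul_nonneg (norm_nonneg q.2.1) (sq_nonneg (‖x‖ - 1)),
      mul_nonneg (abs_nonneg q.2.2) (sq_nonneg ‖x‖)]

lemma quadRatio_zero_one (x : E) : quadRatio (0, 0, 1) x = decay 1 x := by
  simp [quadRatio, quad, decay, Real.rpow_neg_one]

lemma sq_quadRatio_le (p : E × ℝ) (x : E) :
    quadRatio (0, p) x ^ 2 ≤ (4 * ‖p.1‖ ^ 2 + p.2 ^ 2) * decay 1 x := by
  have hinner : |inner ℝ p.1 x| ≤ ‖p.1‖ * ‖x‖ := abs_real_inner_le_norm _ x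
  have hsq : (2 * inner ℝ p.1 x + p.2) ^ 2 ≤ (4 * ‖p.1‖ ^ 2 + p.2 ^ 2) * (1 + ‖x‖ ^ 2) :=
    calc (2 * inner ℝ p.1 x + p.2) ^ 2 ≤ (2 * (‖p.1‖ * ‖x‖) + |p.2|) ^ 2 := by
          rw [← sq_abs]
          gcongr
          exact (abs_add_le _ _).trans (by rw [abs_mul, abs_two]; gcongr)
      _ ≤ (4 * ‖p.1‖ ^ 2 + p.2 ^ 2) * (1 + ‖x‖ ^ 2) := by
          rw [← sq_abs p.2]
          nlinarith [sq_nonneg (2 * ‖p.1‖ - |p.2| * ‖x‖)]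
  rw [quadRatio, quad, decay, Real.rpow_neg_one, div_pow, div_le_iff₀ (by positivity)]
  calc _ = (2 * inner ℝ p.1 x + p.2) ^ 2 := by simp
    _ ≤ _ := hsq
    _ = _ := by field_simp

lemma integrable_decay_mul_sq_quadRatio [FiniteDimensional ℝ E] [MeasurableSpace E] [BorelSpace E]
    {μ : Measure E} [μ.IsAddHaarMeasure] {s : ℝ} (hs : Module.finrank ℝ E < 2 * (s + 1))
    (p : E × ℝ) : Integrable (fun x => decay s x * quadRatio (0, p) x ^ 2) μ := by
  refine ((integrable_decay hs).const_mul (4 * ‖p.1‖ ^ 2 + p.2 ^ 2)).mono' ?_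
    (.of_forall fun x => ?_)
  · exact ((measurable_decay s).mul
      ((isBoundedContinuous_quadRatio _).continuous.measurable.pow_const 2)).aestronglyMeasurable
  · rw [norm_mul, Real.norm_of_nonneg (decay_pos s x).le, Real.norm_of_nonneg (sq_nonneg _),
      decay_add, mul_left_comm]
    exact mul_le_mul_of_nonneg_left (sq_quadRatio_le p x) (decay_pos s x).le

-- The ratios `quadRatio (0, b, c)` are the linear functionals composed with the injection
-- `x ↦ (x, 1) / (1 + |x|²)`, so the moments determine the Fourier transform of a push-forward.
lemma eq_zero_of_moments [FiniteDimensional ℝ E] [MeasurableSpace E] [BorelSpace E]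
    {μ : Measure E} [μ.IsOpenPosMeasure] {ψ : E → ℝ} (hψc : Continuous ψ) (hψ : Integrable ψ μ)
    (h : ∀ p k, ∫ x, ψ x * quadRatio (0, p) x ^ k ∂μ = 0) : ψ = 0 := by
  let T : E → E × ℝ := fun x => (1 + ‖x‖ ^ 2)⁻¹ • (x, 1)
  have hTc : Continuous T :=
    (Continuous.inv₀ (f := fun x : E => 1 + ‖x‖ ^ 2) (by fun_prop) fun x => by positivity).smul
      (by fun_prop)
  have hTi : Function.Injective T := fun x y hxy => by
    obtain ⟨hfst, hsnd⟩ := Prod.mk.inj hxy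
    simp only [smul_eq_mul, mul_one] at hsnd
    rw [hsnd] at hfst
    exact smul_right_injective _ (by positivity) hfst
  refine (Continuous.ae_eq_iff_eq μ hψc continuous_zero).1
    (ae_eq_zero_of_integral_mul_cexp_eq_zero hψ (hTc.measurableEmbedding hTi) fun L => ?_)
  let b := (InnerProductSpace.toDual ℝ E).symm ((2 : ℝ)⁻¹ • L.comp (.inl ℝ E ℝ))
  have hL : ∀ x, L (T x) = quadRatio (0, b, L (0, 1)) x := fun x => by
    have hsplit : ((x, 1) : E × ℝ) = (x, 0) + (0, 1) := by simp
    rw [map_smul, hsplit, map_add, quadRatio, quad, InnerProductSpace.toDual_symm_apply]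
    simp [div_eq_inv_mul]
  simp only [hL]
  have hu := isBoundedContinuous_quadRatio (0, b, L (0, 1))
  exact integral_mul_cexp_eq_zero_of_moments hψ hu.continuous.measurable hu.bounded (h _)

end QuadRatio

section Perturbation

lemma eventually_div_two {P : ℝ → Prop} (hP : ∀ᶠ t in 𝓝 0, P t) : ∀ᶠ t in 𝓝 0, P (t / 2) :=
  ((continuous_id.div_const 2).tendsto' 0 0 (by simp)).eventually hP

variable {E : Type*} [NormedAddCommGroup E] [InnerProductSpace ℝ E]

/-- The coefficients of the perturbation `1 + |x|² + t quad q x` of `1 + |x|²`. -/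
noncomputable def pert (q : ℝ × E × ℝ) (t : ℝ) : ℝ × E × ℝ :=
  (1, 0, 1) + t • q

lemma discr_pert_zero (q : ℝ × E × ℝ) : discr (pert q 0) = 1 := by
  simp [discr, pert]

lemma quad_pert (q : ℝ × E × ℝ) (t : ℝ) (x : E) :
    quad (pert q t) x = (1 + ‖x‖ ^ 2) * (1 + t * quadRatio q x) := by
  have hpos : 1 + ‖x‖ ^ 2 ≠ 0 := by positivity
  have hone : quadRatio ((1, 0, 1) : ℝ × E × ℝ) x = 1 := by
    rw [quadRatio, div_eq_one_iff_eq hpos, quad]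
    simp [add_comm]
  calc quad (pert q t) x = (1 + ‖x‖ ^ 2) * quadRatio (pert q t) x :=
        (mul_div_cancel₀ _ hpos).symm
    _ = (1 + ‖x‖ ^ 2) * (1 + t * quadRatio q x) := by
        rw [pert, quadRatio_add, quadRatio_smul, hone]

lemma continuous_discr_pert (q : ℝ × E × ℝ) : Continuous fun t => discr (pert q t) := by
  simp only [discr, pert]
  fun_prop

lemma eventually_pert_pos (q : ℝ × E × ℝ) :
    ∀ᶠ t in 𝓝 0, 0 < (pert q t).1 ∧ 0 < discr (pert q t) := by
  have hfst : Continuous fun t => (pert q t).1 := by simp only [pert]; fun_prop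
  exact ((hfst.tendsto' 0 1 (by simp [pert])).eventually_const_lt one_pos).and
    (((continuous_discr_pert q).tendsto' 0 1 (discr_pert_zero q)).eventually_const_lt one_pos)

lemma hasDerivAt_discr_pert_rpow (q : ℝ × E × ℝ) (γ : ℝ) :
    HasDerivAt (fun t => discr (pert q t) ^ γ) (γ * (q.1 + q.2.2)) 0 := by
  have hdiscr : ∀ t, discr (pert q t) = (1 + t * q.1) * (1 + t * q.2.2) - t ^ 2 * ‖q.2.1‖ ^ 2 :=
    fun t => by simp [discr, pert, norm_smul, mul_pow]
  have hderiv := ((((hasDerivAt_id' (0 : ℝ)).mul_const q.1).const_add 1).fun_mul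
    (((hasDerivAt_id' (0 : ℝ)).mul_const q.2.2).const_add 1)).fun_sub
    (((hasDerivAt_id' (0 : ℝ)).fun_pow 2).mul_const (‖q.2.1‖ ^ 2))
  simp only [hdiscr]
  exact (hderiv.rpow_const (p := γ) (.inl (by simp))).congr_deriv (by simp [mul_comm])

lemma isBoundedContinuous_quad_rpow {q : ℝ × E × ℝ} (ha : 0 < q.1) (hD : 0 < discr q) {s : ℝ}
    (hs : 0 ≤ s) : IsBoundedContinuous (fun x => quad q x ^ (-s)) := by
  convert ((isBoundedContinuous_decay (E := E) hs).comp
    (u := fun x => (q.1 / √(discr q)) • (x - (-q.1⁻¹) • q.2.1)) (by fun_prop)).const_mul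
    ((discr q / q.1) ^ (-s)) using 2 with x
  rw [quad_eq_mul_one_add_norm_sq ha hD, Real.mul_rpow (by positivity) (by positivity), decay]

lemma hasDerivAt_discr_pert_rpow_mul_integral [MeasurableSpace E] [BorelSpace E]
    {μ : Measure E} {ψ : E → ℝ} (hψ : Integrable ψ μ) (q : ℝ × E × ℝ)
    (γ r : ℝ) :
    HasDerivAt
      (fun t => discr (pert q t) ^ γ * ∫ x, ψ x * (1 + t * quadRatio q x) ^ (-r) ∂μ)
      (γ * (q.1 + q.2.2) * (∫ x, ψ x ∂μ) - r * ∫ x, ψ x * quadRatio q x ∂μ) 0 := by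
  have hu := isBoundedContinuous_quadRatio q
  refine ((hasDerivAt_discr_pert_rpow q γ).fun_mul (hasDerivAt_integral_one_add_rpow hψ
    hu.continuous.measurable hu.bounded (-r))).congr_deriv ?_
  simp only [zero_mul, add_zero, Real.one_rpow, mul_one, discr_pert_zero]
  ring

/-- The power `(1 + |x|² + t quad q x)^{-s}`, a perturbation of the bubble profile `decay s`. -/
noncomputable def pertBubble (s : ℝ) (q : ℝ × E × ℝ) (t : ℝ) (x : E) : ℝ :=
  quad (pert q t) x ^ (-s)

lemma eventually_pertBubble_eq (s : ℝ) (q : ℝ × E × ℝ) : ∀ᶠ t in 𝓝 0, ∀ x,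
    pertBubble s q t x = decay s x * (1 + t * quadRatio q x) ^ (-s) := by
  filter_upwards [eventually_pert_pos q] with t ⟨ha, hD⟩ x
  have hquad := quad_pos ha hD x
  rw [quad_pert] at hquad
  rw [pertBubble, quad_pert, decay,
    Real.mul_rpow (by positivity) (pos_of_mul_pos_right hquad (by positivity)).le]

lemma eventually_contDiff_pertBubble (s : ℝ) (q : ℝ × E × ℝ) :
    ∀ᶠ t in 𝓝 0, ContDiff ℝ 2 (pertBubble s q t) := by
  filter_upwards [eventually_pert_pos q] with t ⟨ha, hD⟩
  exact (contDiff_quad _).rpow_const_of_ne fun x => (quad_pos ha hD x).ne'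

lemma eventually_isBoundedContinuous_pertBubble {s : ℝ} (hs : 0 ≤ s) (q : ℝ × E × ℝ) :
    ∀ᶠ t in 𝓝 0, IsBoundedContinuous (pertBubble s q t) := by
  filter_upwards [eventually_pert_pos q] with t ⟨ha, hD⟩
  exact isBoundedContinuous_quad_rpow ha hD hs

lemma isBigO_second_difference (a : ℝ) :
    (fun y : ℝ => (1 + y) ^ a - 2 * (1 + y / 2) ^ a + 1) =O[𝓝 0] fun y => y ^ 2 := by
  have hfull := isBigO_one_add_rpow_sub a 2
  have hdiv : Tendsto (fun y : ℝ => y / 2) (𝓝 0) (𝓝 0) :=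
    (continuous_id.div_const 2).tendsto' 0 0 (by simp)
  have hsq : (fun y : ℝ => (y / 2) ^ 2) =O[𝓝 0] fun y => y ^ 2 := by
    simp only [div_eq_mul_inv, mul_pow, mul_comm _ ((2 : ℝ)⁻¹ ^ 2)]
    exact (Asymptotics.isBigO_refl _ _).const_mul_left _
  have hhalf := (hfull.comp_tendsto hdiv).trans hsq
  refine (hfull.sub (hhalf.const_mul_left 2)).congr_left fun y => ?_
  simp [Finset.sum_range_succ]
  ring

end Perturbation

section WeakSolutions

variable {E : Type*} [NormedAddCommGroup E] [NormedSpace ℝ E] [MeasurableSpace E]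

/-- A test function `w` for the equation `Lφ = Vφ`, where `L` is the principal value operator with
kernel `k`, together with `g = Lw`. Only `wV` has to be integrable, so that bubbles are included. -/
structure IsTestPair (μ : Measure E) (k V w g : E → ℝ) : Prop where
  contDiff : ContDiff ℝ 2 w
  isBoundedContinuous : IsBoundedContinuous w
  hasPV : HasPV μ k w g
  integrable : Integrable g μ
  integrable_mul : Integrable (fun x => w x * V x) μ

/-- The pairing `∫ (g - wV) φ`, the weak form of `Lφ - Vφ` tested against `w` with `g = Lw`. -/
noncomputable def pairingDefect (μ : Measure E) (V φ w g : E → ℝ) : ℝ :=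
  ∫ x, (g x - w x * V x) * φ x ∂μ

/-- Bounded weak solutions of `Lφ = Vφ`, tested against integrable functions only. -/
structure IsWeakSol (μ : Measure E) (k V φ : E → ℝ) : Prop where
  isBoundedContinuous : IsBoundedContinuous φ
  pairingDefect_eq_zero {w g : E → ℝ} :
    IsTestPair μ k V w g → Integrable w μ → pairingDefect μ V φ w g = 0

variable [FiniteDimensional ℝ E] [BorelSpace E] {μ : Measure E} {k V φ w w₁ w₂ g g₁ g₂ : E → ℝ}

lemma IsTestPair.add_const_mul (hk : IsLevyKernel μ k) (h₁ : IsTestPair μ k V w₁ g₁)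
    (h₂ : IsTestPair μ k V w₂ g₂) (c : ℝ) :
    IsTestPair μ k V (fun x => w₁ x + c * w₂ x) (fun x => g₁ x + c * g₂ x) where
  contDiff := h₁.contDiff.add (contDiff_const.mul h₂.contDiff)
  isBoundedContinuous := h₁.isBoundedContinuous.add (h₂.isBoundedContinuous.const_mul c)
  hasPV := h₁.hasPV.add hk (h₂.hasPV.const_mul c) h₁.isBoundedContinuous
    (h₂.isBoundedContinuous.const_mul c)
  integrable := h₁.integrable.add (h₂.integrable.const_mul c)
  integrable_mul := by
    simpa only [Pi.add_def, add_mul, mul_assoc]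
      using h₁.integrable_mul.add (h₂.integrable_mul.const_mul c)

lemma IsTestPair.integrable_pairing (h : IsTestPair μ k V w g) (hφ : IsBoundedContinuous φ) :
    Integrable (fun x => (g x - w x * V x) * φ x) μ :=
  hφ.integrable_mul (h.integrable.sub h.integrable_mul)

lemma pairingDefect_add_const_mul (h₁ : IsTestPair μ k V w₁ g₁) (h₂ : IsTestPair μ k V w₂ g₂)
    (hφ : IsBoundedContinuous φ) (c : ℝ) :
    pairingDefect μ V φ (fun x => w₁ x + c * w₂ x) (fun x => g₁ x + c * g₂ x)
      = pairingDefect μ V φ w₁ g₁ + c * pairingDefect μ V φ w₂ g₂ := by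
  rw [pairingDefect, pairingDefect, pairingDefect, ← integral_const_mul,
    ← integral_add (h₁.integrable_pairing hφ) ((h₂.integrable_pairing hφ).const_mul c)]
  congr 1; ext x; ring

variable (μ k V) in
/-- The vector space of bounded weak solutions of `Lφ = Vφ`. -/
def weakSolutions : Submodule ℝ (E → ℝ) where
  carrier := {φ | IsWeakSol μ k V φ}
  zero_mem' := ⟨⟨continuous_zero, 0, by simp⟩, fun _ _ => by simp [pairingDefect]⟩
  add_mem' {φ ψ} hφ hψ := by
    refine ⟨hφ.isBoundedContinuous.add hψ.isBoundedContinuous, fun hw hwi => ?_⟩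
    simp only [pairingDefect, Pi.add_apply, mul_add]
    rw [integral_add (hw.integrable_pairing hφ.isBoundedContinuous)
      (hw.integrable_pairing hψ.isBoundedContinuous), ← pairingDefect, ← pairingDefect,
      hφ.pairingDefect_eq_zero hw hwi, hψ.pairingDefect_eq_zero hw hwi, add_zero]
  smul_mem' c φ hφ := by
    refine ⟨hφ.isBoundedContinuous.const_mul c, fun hw hwi => ?_⟩
    simp only [pairingDefect, Pi.smul_apply, smul_eq_mul, mul_left_comm _ c]
    rw [integral_const_mul, ← pairingDefect, hφ.pairingDefect_eq_zero hw hwi, mul_zero]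

lemma HasPV.isWeakSol [μ.IsAddHaarMeasure] (h : HasPV μ k φ (fun x => V x * φ x))
    (hk : IsLevyKernel μ k) (hφ : ContDiff ℝ 2 φ) (hφb : IsBoundedContinuous φ)
    (hVb : IsBoundedContinuous V) : IsWeakSol μ k V φ where
  isBoundedContinuous := hφb
  pairingDefect_eq_zero {w g} hw hwi := by
    have hpair := HasPV.integral_mul_eq hk h hφ hφb (hVb.mul hφb) hw.hasPV hw.contDiff
      hw.isBoundedContinuous hwi hw.integrable
    simp only [pairingDefect, sub_mul, mul_assoc]
    rw [integral_sub (hφb.integrable_mul hw.integrable)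
      ((hVb.mul hφb).integrable_mul hwi), hpair, sub_self]

end WeakSolutions

section CriticalBubble

open Module (finrank)

variable {E : Type*} [NormedAddCommGroup E]

/-- The potential `p κ (1 + |x|²)^{-2γ}`, `p = (s + 2γ) / s`, of the linearization at `decay s`. -/
noncomputable def linearizedPotential (γ s κ : ℝ) (x : E) : ℝ :=
  (s + 2 * γ) / s * κ * decay (2 * γ) x

lemma isBoundedContinuous_linearizedPotential {γ : ℝ} (hγ : 0 ≤ γ) (s κ : ℝ) :
    IsBoundedContinuous (linearizedPotential γ s κ : E → ℝ) :=
  (isBoundedContinuous_decay (by linarith)).const_mul _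

variable [InnerProductSpace ℝ E]

/-- The image of `pertBubble s q t` under the principal value operator with kernel `rieszKer γ`. -/
noncomputable def pertBubbleImage (γ s κ : ℝ) (q : ℝ × E × ℝ) (t : ℝ) (x : E) : ℝ :=
  κ * (discr (pert q t) ^ γ * pertBubble (s + 2 * γ) q t x)

variable [MeasurableSpace E]

/-- The bubble `decay s` solves `Lw = κ w^{(s+2γ)/s}` with the critical exponent, where `L` is the
principal value operator with kernel `rieszKer γ`. -/
structure IsCriticalBubble (μ : Measure E) (γ s κ : ℝ) : Prop where
  order_pos : 0 < γ
  order_lt_one : γ < 1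
  exponent_pos : 0 < s
  two_mul_exponent : 2 * s = finrank ℝ E - 2 * γ
  const_ne_zero : κ ≠ 0
  hasPV : HasPV μ (rieszKer γ) (decay s) (fun x => κ * decay (s + 2 * γ) x)

lemma IsCriticalBubble.finrank_lt {μ : Measure E} {γ s κ : ℝ} (h : IsCriticalBubble μ γ s κ) :
    finrank ℝ E < 2 * (s + 1) := by
  linarith [h.two_mul_exponent, h.order_lt_one]

/-- The value of `pairingDefect` at a perturbed bubble, divided by `κ` and with `1 + |x|²` factored
out of `quad (pert q t)`, so that its expansion in `t` consists of moments of `quadRatio q`. -/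
noncomputable def bubbleDefect (μ : Measure E) (γ s : ℝ) (φ : E → ℝ) (q : ℝ × E × ℝ) (t : ℝ) : ℝ :=
  discr (pert q t) ^ γ *
      (∫ x, decay (s + 2 * γ) x * φ x * (1 + t * quadRatio q x) ^ (-(s + 2 * γ)) ∂μ) -
    (s + 2 * γ) / s * ∫ x, decay (s + 2 * γ) x * φ x * (1 + t * quadRatio q x) ^ (-s) ∂μ

variable [FiniteDimensional ℝ E] [BorelSpace E] {μ : Measure E} [μ.IsAddHaarMeasure]
  {γ s κ : ℝ} {φ : E → ℝ}

namespace IsCriticalBubble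

lemma isLevyKernel (h : IsCriticalBubble μ γ s κ) : IsLevyKernel μ (rieszKer γ) := by
  have hfinrank : (0 : ℝ) < finrank ℝ E := by
    linarith [h.two_mul_exponent, h.order_pos, h.exponent_pos]
  have : Nontrivial E := Module.nontrivial_of_finrank_pos (by exact_mod_cast hfinrank)
  exact isLevyKernel_rieszKer h.order_pos h.order_lt_one

lemma integrable_decay_mul (h : IsCriticalBubble μ γ s κ) (hφ : IsBoundedContinuous φ) :
    Integrable (fun x => decay (s + 2 * γ) x * φ x) μ :=
  hφ.integrable_mul (integrable_decay (by linarith [h.two_mul_exponent, h.order_pos]))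

lemma eventually_hasPV_pertBubble (h : IsCriticalBubble μ γ s κ) (q : ℝ × E × ℝ) : ∀ᶠ t in 𝓝 0,
    HasPV μ (rieszKer γ) (pertBubble s q t) (pertBubbleImage γ s κ q t) := by
  filter_upwards [eventually_pert_pos q] with t ⟨ha, hD⟩
  exact h.hasPV.quad_rpow ha hD

lemma eventually_integrable_decay_mul_rpow (h : IsCriticalBubble μ γ s κ)
    (hφ : IsBoundedContinuous φ) (q : ℝ × E × ℝ) (a : ℝ) : ∀ᶠ t in 𝓝 0,
      Integrable (fun x => decay (s + 2 * γ) x * φ x * (1 + t * quadRatio q x) ^ a) μ :=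
  let hu := isBoundedContinuous_quadRatio q
  eventually_integrable_mul_one_add_rpow (h.integrable_decay_mul hφ) hu.continuous.measurable
    hu.bounded a

lemma eventually_isTestPair_pertBubble (h : IsCriticalBubble μ γ s κ) (q : ℝ × E × ℝ) :
    ∀ᶠ t in 𝓝 0, IsTestPair μ (rieszKer γ) (linearizedPotential γ s κ) (pertBubble s q t)
      (pertBubbleImage γ s κ q t) := by
  have hone : IsBoundedContinuous (fun _ : E => (1 : ℝ)) := ⟨continuous_const, 1, by simp⟩
  filter_upwards [eventually_contDiff_pertBubble s q,
    eventually_isBoundedContinuous_pertBubble h.exponent_pos.le q,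
    h.eventually_hasPV_pertBubble q, eventually_pertBubble_eq s q,
    eventually_pertBubble_eq (s + 2 * γ) q,
    h.eventually_integrable_decay_mul_rpow hone q (-s),
    h.eventually_integrable_decay_mul_rpow hone q (-(s + 2 * γ))]
    with t hdiff hbdd hpv hs hr hint hint'
  refine ⟨hdiff, hbdd, hpv, ?_,
    (hint.const_mul ((s + 2 * γ) / s * κ)).congr (.of_forall fun x => ?_)⟩
  · unfold pertBubbleImage
    simpa only [hr, mul_one] using (hint'.const_mul (discr (pert q t) ^ γ)).const_mul κ
  · simp only [linearizedPotential, hs, decay_add]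
    ring

lemma eventually_pairingDefect_pertBubble (h : IsCriticalBubble μ γ s κ)
    (hφ : IsBoundedContinuous φ) (q : ℝ × E × ℝ) : ∀ᶠ t in 𝓝 0,
      pairingDefect μ (linearizedPotential γ s κ) φ (pertBubble s q t) (pertBubbleImage γ s κ q t)
        = κ * bubbleDefect μ γ s φ q t := by
  filter_upwards [eventually_pertBubble_eq s q, eventually_pertBubble_eq (s + 2 * γ) q,
    h.eventually_integrable_decay_mul_rpow hφ q (-s),
    h.eventually_integrable_decay_mul_rpow hφ q (-(s + 2 * γ))] with t hs hr hint hint'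
  have hpointwise : ∀ x, (pertBubbleImage γ s κ q t x
        - pertBubble s q t x * linearizedPotential γ s κ x) * φ x =
      κ * discr (pert q t) ^ γ *
          (decay (s + 2 * γ) x * φ x * (1 + t * quadRatio q x) ^ (-(s + 2 * γ)))
        - κ * ((s + 2 * γ) / s) *
          (decay (s + 2 * γ) x * φ x * (1 + t * quadRatio q x) ^ (-s)) := fun x => by
    simp only [pertBubbleImage, linearizedPotential, hs, hr, decay_add]
    ring
  simp only [pairingDefect, hpointwise, bubbleDefect]
  rw [integral_sub (hint'.const_mul _) (hint.const_mul _), integral_const_mul, integral_const_mul]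
  ring

end IsCriticalBubble

end CriticalBubble

section MomentVanishing

open Module (finrank)

variable {E : Type*} [NormedAddCommGroup E] [InnerProductSpace ℝ E] [FiniteDimensional ℝ E]
  [MeasurableSpace E] [BorelSpace E] {μ : Measure E} [μ.IsAddHaarMeasure] {γ s κ : ℝ} {φ : E → ℝ}

-- The bubbles themselves need not be integrable, but this difference of two of them is.
lemma eventually_integrable_pertBubble_sub {s : ℝ} (hs : finrank ℝ E < 2 * (s + 1)) :
    ∀ᶠ t in 𝓝 0, Integrable (fun x : E =>
      pertBubble s (0, 0, 1) t x + (-1) * pertBubble s (0, 0, 1) 0 x) μ := by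
  have hu := isBoundedContinuous_quadRatio (0, (0 : E), 1)
  have hO := isBigO_one_add_rpow_sub (-s) 1
  simp only [Finset.sum_range_one, Ring.choose_zero_right, pow_zero, mul_one] at hO
  have hint := eventually_integrable_mul_comp_mul (ν := μ) hu.bounded hu.continuous.measurable
    (measurable_decay s).aestronglyMeasurable (by fun_prop) hO
    (by simpa only [quadRatio_zero_one, pow_one, ← decay_add] using integrable_decay hs)
  have heq := eventually_pertBubble_eq s (0, (0 : E), 1)
  filter_upwards [hint, heq] with t ht ht'
  refine ht.congr (.of_forall fun x => ?_)
  simp only [ht', heq.self_of_nhds, zero_mul, add_zero, Real.one_rpow]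
  ring

lemma eventually_integrable_pertBubble_second_difference (hs : finrank ℝ E < 2 * (s + 1))
    (p : E × ℝ) : ∀ᶠ t in 𝓝 0, Integrable (fun x : E =>
      pertBubble s (0, p) t x + (-2) * pertBubble s (0, p) (t / 2) x
        + 1 * pertBubble s (0, p) 0 x) μ := by
  have hu := isBoundedContinuous_quadRatio (0, p)
  have hint := eventually_integrable_mul_comp_mul (ν := μ) hu.bounded hu.continuous.measurable
    (measurable_decay s).aestronglyMeasurable (by fun_prop) (isBigO_second_difference (-s))
    (integrable_decay_mul_sq_quadRatio hs p)
  have heq := eventually_pertBubble_eq s (0, p)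
  filter_upwards [hint, heq, eventually_div_two heq] with t ht ht' hhalf
  refine ht.congr (.of_forall fun x => ?_)
  simp only [ht', hhalf, heq.self_of_nhds, zero_mul, add_zero, Real.one_rpow,
    div_mul_eq_mul_div]
  ring

namespace IsCriticalBubble

section WeakSol

variable (h : IsCriticalBubble μ γ s κ)
  (hφ : IsWeakSol μ (rieszKer γ) (linearizedPotential γ s κ) φ)
include h hφ

lemma eventually_bubbleDefect_eq : ∀ᶠ t in 𝓝 0,
    bubbleDefect μ γ s φ (0, 0, 1) t = bubbleDefect μ γ s φ (0, 0, 1) 0 := by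
  have htest := h.eventually_isTestPair_pertBubble (0, 0, 1)
  have hdefect := h.eventually_pairingDefect_pertBubble hφ.isBoundedContinuous (0, 0, 1)
  filter_upwards [eventually_integrable_pertBubble_sub (μ := μ) h.finrank_lt, htest,
    hdefect] with t hint ht hd
  have hzero := hφ.pairingDefect_eq_zero
    (ht.add_const_mul h.isLevyKernel htest.self_of_nhds (-1)) hint
  rw [pairingDefect_add_const_mul ht htest.self_of_nhds hφ.isBoundedContinuous, hd,
    hdefect.self_of_nhds] at hzero
  exact mul_left_cancel₀ h.const_ne_zero (by linarith)

lemma eventually_bubbleDefect_second_difference (p : E × ℝ) : ∀ᶠ t in 𝓝 0,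
    bubbleDefect μ γ s φ (0, p) t = 2 * bubbleDefect μ γ s φ (0, p) (t / 2)
      - bubbleDefect μ γ s φ (0, p) 0 := by
  have htest := h.eventually_isTestPair_pertBubble (0, p)
  have hdefect := h.eventually_pairingDefect_pertBubble hφ.isBoundedContinuous (0, p)
  filter_upwards [eventually_integrable_pertBubble_second_difference (μ := μ) h.finrank_lt p,
    htest, eventually_div_two htest, hdefect, eventually_div_two hdefect]
    with t hint ht hthalf hd hdhalf
  have hpair := ht.add_const_mul h.isLevyKernel hthalf (-2)
  have hzero := hφ.pairingDefect_eq_zero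
    (hpair.add_const_mul h.isLevyKernel htest.self_of_nhds 1) hint
  rw [pairingDefect_add_const_mul hpair htest.self_of_nhds hφ.isBoundedContinuous,
    pairingDefect_add_const_mul ht hthalf hφ.isBoundedContinuous, hd, hdhalf,
    hdefect.self_of_nhds] at hzero
  exact mul_left_cancel₀ h.const_ne_zero (by linarith)

lemma integral_decay_mul_eq_zero : ∫ x, decay (s + 2 * γ) x * φ x ∂μ = 0 := by
  have hψ := h.integrable_decay_mul hφ.isBoundedContinuous
  have hu := isBoundedContinuous_quadRatio (0, (0 : E), 1)
  have hderiv : HasDerivAt (bubbleDefect μ γ s φ (0, 0, 1)) _ 0 :=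
    (hasDerivAt_discr_pert_rpow_mul_integral hψ (0, 0, 1) γ (s + 2 * γ)).sub
      ((hasDerivAt_integral_one_add_rpow hψ hu.continuous.measurable hu.bounded (-s)).const_mul
        ((s + 2 * γ) / s))
  have hzero := hderiv.unique ((hasDerivAt_const 0 _).congr_of_eventuallyEq
    (h.eventually_bubbleDefect_eq hφ))
  simp only [zero_add, mul_one] at hzero
  have hcancel : (s + 2 * γ) / s * (-s) = -(s + 2 * γ) := by
    rw [mul_neg, div_mul_cancel₀ _ h.exponent_pos.ne']
  rw [← mul_assoc ((s + 2 * γ) / s), hcancel] at hzero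
  exact (mul_eq_zero.1 (by linarith)).resolve_left h.order_pos.ne'

lemma tendsto_bubbleDefect_div_pow (p : E × ℝ) {k : ℕ}
    (hm : ∀ j < k, ∫ x, decay (s + 2 * γ) x * φ x * quadRatio (0, p) x ^ j ∂μ = 0) :
    Tendsto (fun t => bubbleDefect μ γ s φ (0, p) t / t ^ k) (𝓝[≠] 0)
      (𝓝 ((Ring.choose (-(s + 2 * γ)) k - (s + 2 * γ) / s * Ring.choose (-s) k) *
        ∫ x, decay (s + 2 * γ) x * φ x * quadRatio (0, p) x ^ k ∂μ)) := by
  have hu := isBoundedContinuous_quadRatio (0, p)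
  have hlim := fun a => tendsto_integral_one_add_rpow_div_pow
    (h.integrable_decay_mul hφ.isBoundedContinuous) hu.continuous.measurable hu.bounded a hm
  have hdiscr : Tendsto (fun t => discr (pert (0, p) t) ^ γ) (𝓝[≠] 0) (𝓝 1) := by
    simpa [discr_pert_zero] using
      (hasDerivAt_discr_pert_rpow (0, p) γ).continuousAt.tendsto.mono_left nhdsWithin_le_nhds
  convert (hdiscr.mul (hlim (-(s + 2 * γ)))).sub ((hlim (-s)).const_mul ((s + 2 * γ) / s))
    using 2 with t
  · rw [bubbleDefect]; ring
  · ring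

-- The second difference annihilates affine functions of `t`, so `t ↦ bubbleDefect t` behaves like a
-- linear function and cannot have a leading term of degree `k ≥ 2`.
lemma integral_decay_mul_pow_eq_zero (p : E × ℝ)
    (hfirst : ∫ x, decay (s + 2 * γ) x * φ x * quadRatio (0, p) x ∂μ = 0) (k : ℕ) :
    ∫ x, decay (s + 2 * γ) x * φ x * quadRatio (0, p) x ^ k ∂μ = 0 := by
  have hzeroth := h.integral_decay_mul_eq_zero hφ
  induction k using Nat.strong_induction_on with
  | _ k ih =>
  obtain rfl | rfl | hk : k = 0 ∨ k = 1 ∨ 2 ≤ k := by omega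
  · simpa using hzeroth
  · simpa using hfirst
  have hbase : bubbleDefect μ γ s φ (0, p) 0 = 0 := by simp [bubbleDefect, hzeroth]
  have hhalf : ∀ᶠ t in 𝓝[≠] 0,
      bubbleDefect μ γ s φ (0, p) t = 2 * bubbleDefect μ γ s φ (0, p) (t / 2) := by
    simpa only [hbase, sub_zero] using
      (h.eventually_bubbleDefect_second_difference hφ p).filter_mono nhdsWithin_le_nhds
  have hleading := eq_zero_of_tendsto_div_pow_of_eq_two_mul_half hk
    (h.tendsto_bubbleDefect_div_pow hφ p ih) hhalf
  refine (mul_eq_zero.1 hleading).resolve_left fun hcoeff => ?_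
  have hs := h.exponent_pos
  have hr : s < s + 2 * γ := by linarith [h.order_pos]
  refine mul_choose_neg_ne hs hr hk ?_
  rw [sub_eq_zero.1 hcoeff]
  field_simp

theorem eq_zero_of_first_moments
    (hfirst : ∀ p, ∫ x, decay (s + 2 * γ) x * φ x * quadRatio (0, p) x ∂μ = 0) : φ = 0 := by
  have hdecay := (isBoundedContinuous_decay (E := E) (r := s + 2 * γ)
    (by linarith [h.exponent_pos, h.order_pos])).continuous
  have hzero := eq_zero_of_moments (hdecay.mul hφ.isBoundedContinuous.continuous)
    (h.integrable_decay_mul hφ.isBoundedContinuous)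
    fun p => h.integral_decay_mul_pow_eq_zero hφ p (hfirst p)
  ext x
  exact (mul_eq_zero.1 (congrFun hzero x)).resolve_left (decay_pos _ x).ne'

end WeakSol

end IsCriticalBubble

end MomentVanishing

section Classification

variable {E : Type*} [NormedAddCommGroup E] [InnerProductSpace ℝ E]

/-- The infinitesimal variations `x ↦ (1 + |x|²)^{-s} (a|x|² + 2⟨b, x⟩ - a) / (1 + |x|²)` of the
bubble `decay s` under translations (`b`) and dilations (`a`), indexed by `(b, a)`. -/
noncomputable def bubbleVariation (s : ℝ) : E × ℝ →ₗ[ℝ] E → ℝ where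
  toFun p x := decay s x * quadRatio (p.2, p.1, -p.2) x
  map_add' p p' := by
    ext x
    have hsum : ((p + p').2, (p + p').1, -(p + p').2) = (p.2, p.1, -p.2) + (p'.2, p'.1, -p'.2) := by
      simp [add_comm]
    simp only [hsum, quadRatio_add, mul_add, Pi.add_apply]
  map_smul' c p := by
    ext x
    have hsmul : ((c • p).2, (c • p).1, -(c • p).2) = c • (p.2, p.1, -p.2) := by simp
    simp only [hsmul, quadRatio_smul, mul_left_comm _ c, Pi.smul_apply, smul_eq_mul,
      RingHom.id_apply]

lemma bubbleVariation_apply (s : ℝ) (p : E × ℝ) (x : E) :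
    bubbleVariation s p x = decay s x * quadRatio (p.2, p.1, -p.2) x := rfl

lemma bubbleVariation_injective (s : ℝ) :
    Function.Injective (bubbleVariation s : E × ℝ →ₗ[ℝ] E → ℝ) := by
  refine (injective_iff_map_eq_zero _).2 fun ⟨b, a⟩ hzero => ?_
  have hquad (x : E) : quad (a, b, -a) x = 0 := by
    have hx := (mul_eq_zero.1 (congrFun hzero x)).resolve_left (decay_pos s x).ne'
    exact (div_eq_zero_iff.1 hx).resolve_right (by positivity)
  have ha : a = 0 := by simpa [quad] using hquad 0
  have hb : b = 0 := by simpa [quad, ha] using hquad b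
  rw [ha, hb, Prod.mk_zero_zero]

variable [FiniteDimensional ℝ E] [MeasurableSpace E] [BorelSpace E] {μ : Measure E}
  [μ.IsAddHaarMeasure] {γ s κ : ℝ}

namespace IsCriticalBubble

lemma eventually_integral_mul_pertBubble (h : IsCriticalBubble μ γ s κ) {w g : E → ℝ}
    (hw : IsTestPair μ (rieszKer γ) (linearizedPotential γ s κ) w g) (hwi : Integrable w μ)
    (q : ℝ × E × ℝ) : ∀ᶠ t in 𝓝 0,
      κ * (discr (pert q t) ^ γ *
        ∫ x, w x * decay (s + 2 * γ) x * (1 + t * quadRatio q x) ^ (-(s + 2 * γ)) ∂μ) =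
      ∫ x, g x * decay s x * (1 + t * quadRatio q x) ^ (-s) ∂μ := by
  have hr : 0 ≤ s + 2 * γ := by linarith [h.exponent_pos, h.order_pos]
  filter_upwards [h.eventually_hasPV_pertBubble q, eventually_contDiff_pertBubble s q,
    eventually_isBoundedContinuous_pertBubble h.exponent_pos.le q,
    eventually_isBoundedContinuous_pertBubble hr q, eventually_pertBubble_eq s q,
    eventually_pertBubble_eq (s + 2 * γ) q] with t hpv hdiff hbdd hbdd' heq heq'
  have hpair := hpv.integral_mul_eq h.isLevyKernel hdiff hbdd
    ((hbdd'.const_mul (discr (pert q t) ^ γ)).const_mul κ) hw.hasPV hw.contDiff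
    hw.isBoundedContinuous hwi hw.integrable
  simp only [pertBubbleImage, heq, heq'] at hpair
  simpa only [mul_assoc, mul_left_comm (w _), integral_const_mul] using hpair

-- Differentiate the symmetry relation between `w` and the family of perturbed bubbles at `t = 0`.
lemma isWeakSol_decay_mul_quadRatio (h : IsCriticalBubble μ γ s κ) {q : ℝ × E × ℝ}
    (hq : q.1 + q.2.2 = 0) : IsWeakSol μ (rieszKer γ) (linearizedPotential γ s κ)
      (fun x => decay s x * quadRatio q x) := by
  have hs := h.exponent_pos
  have hu := isBoundedContinuous_quadRatio q
  have hsb := isBoundedContinuous_decay (E := E) hs.le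
  have hrb := isBoundedContinuous_decay (E := E) (r := s + 2 * γ) (by linarith [h.order_pos])
  refine ⟨hsb.mul hu, fun {w g} hw hwi => ?_⟩
  have hwr : Integrable (fun x => w x * decay (s + 2 * γ) x) μ := hrb.integrable_mul hwi
  have hgs : Integrable (fun x => g x * decay s x) μ := hsb.integrable_mul hw.integrable
  have hderiv := ((hasDerivAt_discr_pert_rpow_mul_integral hwr q γ (s + 2 * γ)).const_mul
    κ).unique ((hasDerivAt_integral_one_add_rpow hgs hu.continuous.measurable hu.bounded
      (-s)).congr_of_eventuallyEq (h.eventually_integral_mul_pertBubble hw hwi q))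
  have hpointwise (x : E) : (g x - w x * linearizedPotential γ s κ x) *
      (decay s x * quadRatio q x) = g x * decay s x * quadRatio q x
        - (s + 2 * γ) / s * κ * (w x * decay (s + 2 * γ) x * quadRatio q x) := by
    rw [linearizedPotential, decay_add]; ring
  simp only [pairingDefect, hpointwise]
  rw [integral_sub (hu.integrable_mul hgs) ((hu.integrable_mul hwr).const_mul _),
    integral_const_mul]
  rw [hq, mul_zero, zero_mul, zero_sub] at hderiv
  refine (mul_eq_zero.1 (?_ : s * _ = 0)).resolve_left hs.ne'
  rw [mul_sub, ← mul_assoc, ← mul_assoc s, mul_div_cancel₀ _ hs.ne']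
  linarith

lemma range_bubbleVariation_le (h : IsCriticalBubble μ γ s κ) :
    LinearMap.range (bubbleVariation s) ≤
      weakSolutions μ (rieszKer γ) (linearizedPotential γ s κ) := by
  rintro _ ⟨p, rfl⟩
  exact h.isWeakSol_decay_mul_quadRatio (add_neg_cancel p.2)

/-- The moments of a weak solution `φ` against `decay (s + 2γ) · quadRatio (0, p)`, which by
`eq_zero_of_first_moments` determine `φ`. -/
noncomputable def firstMoments (h : IsCriticalBubble μ γ s κ) :
    weakSolutions μ (rieszKer γ) (linearizedPotential γ s κ) →ₗ[ℝ] Module.Dual ℝ (E × ℝ) :=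
  have hint (φ : weakSolutions μ (rieszKer γ) (linearizedPotential γ s κ)) (p : E × ℝ) :
      Integrable (fun x => decay (s + 2 * γ) x * φ.1 x * quadRatio (0, p) x) μ :=
    (isBoundedContinuous_quadRatio _).integrable_mul
      (h.integrable_decay_mul φ.2.isBoundedContinuous)
  LinearMap.mk₂ ℝ (fun φ p => ∫ x, decay (s + 2 * γ) x * φ.1 x * quadRatio (0, p) x ∂μ)
    (fun φ φ' p => by
      rw [← integral_add (hint φ p) (hint φ' p)]
      simp only [Submodule.coe_add, Pi.add_apply, mul_add, add_mul])
    (fun c φ p => by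
      rw [smul_eq_mul, ← integral_const_mul]
      simp only [Submodule.coe_smul, Pi.smul_apply, smul_eq_mul, mul_left_comm _ c, mul_assoc])
    (fun φ p p' => by
      have hsum : ((0, p + p') : ℝ × E × ℝ) = (0, p) + (0, p') := by simp
      rw [← integral_add (hint φ p) (hint φ p')]
      simp only [hsum, quadRatio_add, mul_add])
    (fun c φ p => by
      have hsmul : ((0, c • p) : ℝ × E × ℝ) = c • (0, p) := by simp
      rw [smul_eq_mul, ← integral_const_mul]
      simp only [hsmul, quadRatio_smul, mul_left_comm _ c])

lemma firstMoments_injective (h : IsCriticalBubble μ γ s κ) :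
    Function.Injective h.firstMoments :=
  (injective_iff_map_eq_zero _).2 fun φ hzero =>
    Subtype.ext (h.eq_zero_of_first_moments φ.2 fun p => LinearMap.congr_fun hzero p)

theorem range_bubbleVariation (h : IsCriticalBubble μ γ s κ) :
    LinearMap.range (bubbleVariation s) =
      weakSolutions μ (rieszKer γ) (linearizedPotential γ s κ) := by
  have := FiniteDimensional.of_injective _ h.firstMoments_injective
  refine Submodule.eq_of_le_of_finrank_le h.range_bubbleVariation_le ?_
  rw [LinearMap.finrank_range_of_inj (bubbleVariation_injective s)]
  exact (LinearMap.finrank_le_finrank_of_injective h.firstMoments_injective).trans_eq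
    Subspace.dual_finrank_eq

end IsCriticalBubble

end Classification

section BubbleDerivatives

variable {E : Type*} [NormedAddCommGroup E] [InnerProductSpace ℝ E] {μ : ℝ}

lemma div_sq_add_norm_sq_rpow (hμ : 0 < μ) (s : ℝ) (v : E) :
    (μ / (μ ^ 2 + ‖v‖ ^ 2)) ^ s = μ ^ (-s) * decay s (μ⁻¹ • v) := by
  have hfactor : μ / (μ ^ 2 + ‖v‖ ^ 2) = (μ * (1 + ‖μ⁻¹ • v‖ ^ 2))⁻¹ := by
    rw [norm_smul, mul_pow, Real.norm_eq_abs, sq_abs]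
    field_simp
  rw [hfactor, Real.inv_rpow (by positivity), ← Real.rpow_neg (by positivity),
    Real.mul_rpow hμ.le (by positivity), decay]

lemma hasDerivAt_div_sq_add_norm_sq_rpow (hμ : 0 < μ) (s : ℝ) (v : E) :
    HasDerivAt (fun t => (t / (t ^ 2 + ‖v‖ ^ 2)) ^ s)
      (s * μ ^ (-s - 1) * bubbleVariation s ((0 : E), 1) (μ⁻¹ • v)) μ := by
  have hD : 0 < μ ^ 2 + ‖v‖ ^ 2 := by positivity
  have hderiv := ((hasDerivAt_id' μ).fun_div
    (((hasDerivAt_id' μ).fun_pow 2).add_const (‖v‖ ^ 2)) hD.ne').rpow_const (p := s)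
      (.inl (by positivity))
  refine hderiv.congr_deriv ?_
  rw [Real.rpow_sub_one (by positivity), div_sq_add_norm_sq_rpow hμ, Real.rpow_sub_one hμ.ne',
    bubbleVariation_apply, quadRatio, quad, inner_zero_left, norm_smul, mul_pow,
    Real.norm_eq_abs, sq_abs]
  field_simp
  push_cast
  ring

lemma hasFDerivAt_div_sq_add_norm_sq_rpow (hμ : 0 < μ) (s : ℝ) (x ξ : E) :
    HasFDerivAt (fun ζ => (μ / (μ ^ 2 + ‖x - ζ‖ ^ 2)) ^ s)
      ((2 * s * (μ / (μ ^ 2 + ‖x - ξ‖ ^ 2)) ^ s / (μ ^ 2 + ‖x - ξ‖ ^ 2)) •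
        innerSL ℝ (x - ξ)) ξ := by
  have hD : 0 < μ ^ 2 + ‖x - ξ‖ ^ 2 := by positivity
  have houter : HasDerivAt (fun r : ℝ => (μ / (μ ^ 2 + r)) ^ s) _ (‖x - ξ‖ ^ 2) :=
    ((hasDerivAt_const _ μ).fun_div ((hasDerivAt_id' _).const_add (μ ^ 2)) hD.ne').rpow_const
      (p := s) (.inl (by positivity))
  refine (houter.comp_hasFDerivAt ξ ((hasFDerivAt_id ξ).const_sub x).norm_sq).congr_fderiv ?_
  rw [Real.rpow_sub_one (by positivity), ContinuousLinearMap.comp_neg,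
    ContinuousLinearMap.comp_id, ← Nat.cast_smul_eq_nsmul ℝ, smul_smul, smul_neg, ← neg_smul]
  congr 1
  field_simp
  push_cast [id_eq]
  ring

end BubbleDerivatives

section EuclideanSpace

variable {n : ℕ} {γ α μ p s : ℝ}

lemma pvInt_eq_truncOp (φ : EuclideanSpace ℝ (Fin n) → ℝ) (x : EuclideanSpace ℝ (Fin n)) (ε : ℝ) :
    pvInt n γ φ x ε = truncOp volume (rieszKer γ) ε φ x := by
  have hm : MeasurableSet {y : EuclideanSpace ℝ (Fin n) | ε < ‖y - x‖} :=
    measurableSet_lt measurable_const (by fun_prop)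
  rw [pvInt, ← integral_indicator hm, truncOp, ← integral_sub_left_eq_self _ _ x]
  congr 1; ext h
  by_cases hh : ε < ‖h‖ <;> simp [truncKer, rieszKer, hh, div_eq_inv_mul]

lemma hasPV_of_forall_exists {φ f : EuclideanSpace ℝ (Fin n) → ℝ} {C : ℝ} (hC : C ≠ 0)
    (h : ∀ x, ∃ L, Tendsto (pvInt n γ φ x) (𝓝[>] 0) (𝓝 L) ∧ C * L = f x) :
    HasPV volume (rieszKer γ) φ fun x => C⁻¹ * f x := fun x => by
  obtain ⟨L, hL, hCL⟩ := h x
  beta_reduce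
  rw [← hCL, inv_mul_cancel_left₀ hC]
  exact hL.congr fun ε => pvInt_eq_truncOp φ x ε

lemma fracLapConst_pos (n : ℕ) (hγ0 : 0 < γ) (hγ1 : γ < 1) : 0 < fracLapConst n γ := by
  have : 0 < Real.Gamma ((n : ℝ) / 2 + γ) := Real.Gamma_pos_of_pos (by positivity)
  have hden : Real.Gamma (-γ) ≠ 0 := Real.Gamma_ne_zero fun m hm => by
    rw [neg_injective hm] at hγ0 hγ1
    norm_cast at hγ0 hγ1
    omega
  unfold fracLapConst
  positivity

lemma zBubble_eq (hs : s = ((n : ℝ) - 2 * γ) / 2) (α : ℝ) (hμ : 0 < μ)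
    (ξ x : EuclideanSpace ℝ (Fin n)) :
    zBubble n γ α μ ξ x = α * (μ ^ (-s) * decay s (μ⁻¹ • (x - ξ))) := by
  rw [zBubble, ← hs, div_sq_add_norm_sq_rpow hμ]

lemma isCriticalBubble_of_z0 (hγ0 : 0 < γ) (hγ1 : γ < 1) (hs0 : 0 < s)
    (hs : s = ((n : ℝ) - 2 * γ) / 2) (hp : p = (s + 2 * γ) / s) (hα : 0 < α)
    (hz0 : ∀ x : EuclideanSpace ℝ (Fin n), ∃ L : ℝ,
      Tendsto (pvInt n γ (z0 n γ α) x) (𝓝[>] 0) (𝓝 L) ∧ fracLapConst n γ * L = z0 n γ α x ^ p) :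
    IsCriticalBubble (volume : Measure (EuclideanSpace ℝ (Fin n))) γ s
      ((fracLapConst n γ)⁻¹ * α ^ (p - 1)) := by
  have hC := fracLapConst_pos n hγ0 hγ1
  refine ⟨hγ0, hγ1, hs0, ?_, by positivity, ?_⟩
  · rw [finrank_euclideanSpace_fin]; linarith
  have hz (x : EuclideanSpace ℝ (Fin n)) : z0 n γ α x = α * decay s x := by rw [z0, ← hs, decay]
  convert (hasPV_of_forall_exists hC.ne' hz0).const_mul α⁻¹ using 2 with x x
  · rw [hz, inv_mul_cancel_left₀ hα.ne']
  · rw [hz, Real.mul_rpow hα.le (decay_pos s x).le, decay_rpow, hp, mul_div_cancel₀ _ hs0.ne',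
      Real.rpow_sub_one hα.ne']
    ring

lemma hasPV_comp_dilation (hγ0 : 0 < γ) (hγ1 : γ < 1) (hs0 : 0 < s)
    (hs : s = ((n : ℝ) - 2 * γ) / 2) (hp : p = (s + 2 * γ) / s) (hα : 0 < α) (hμ : 0 < μ)
    (ξ : EuclideanSpace ℝ (Fin n)) {φ : EuclideanSpace ℝ (Fin n) → ℝ}
    (hφ : ∀ x, ∃ L, Tendsto (pvInt n γ φ x) (𝓝[>] 0) (𝓝 L) ∧
      fracLapConst n γ * L = p * zBubble n γ α μ ξ x ^ (p - 1) * φ x) :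
    HasPV volume (rieszKer γ) (fun y => φ (μ • y + ξ)) (fun y =>
      linearizedPotential γ s ((fracLapConst n γ)⁻¹ * α ^ (p - 1)) y * φ (μ • y + ξ)) := by
  have hrescaled := (hasPV_of_forall_exists (fracLapConst_pos n hγ0 hγ1).ne' hφ).comp_affine hμ
    ((-μ⁻¹) • ξ)
  have hcenter (y : EuclideanSpace ℝ (Fin n)) : μ • (y - (-μ⁻¹) • ξ) = μ • y + ξ := by
    rw [neg_smul, sub_neg_eq_add, smul_add, smul_inv_smul₀ hμ.ne']
  have hexp : s * (p - 1) = 2 * γ := by rw [hp]; field_simp; ring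
  convert hrescaled using 2 with y y
  · rw [hcenter]
  · rw [hcenter, zBubble_eq hs α hμ, add_sub_cancel_right, inv_smul_smul₀ hμ.ne',
      Real.mul_rpow hα.le (by have := decay_pos s y; positivity),
      Real.mul_rpow (by positivity) (decay_pos s y).le, decay_rpow, ← Real.rpow_mul hμ.le,
      neg_mul, hexp, Real.rpow_neg hμ.le, linearizedPotential, ← hp]
    field_simp

lemma bubbleVariation_eq_sum (s : ℝ) (b : EuclideanSpace ℝ (Fin n)) (a : ℝ) :
    bubbleVariation s (b, a) = a • bubbleVariation s (0, 1) +
      ∑ i, b i • bubbleVariation s (EuclideanSpace.single i (1 : ℝ), 0) := by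
  have hb : b = ∑ i, b i • EuclideanSpace.single i (1 : ℝ) := by
    simpa using ((EuclideanSpace.basisFun (Fin n) ℝ).sum_repr b).symm
  have hpair : (b, a) = a • ((0 : EuclideanSpace ℝ (Fin n)), (1 : ℝ)) +
      ∑ i, b i • (EuclideanSpace.single i (1 : ℝ), (0 : ℝ)) := by
    ext1 <;> simp [Prod.fst_sum, Prod.snd_sum, ← hb]
  rw [hpair, map_add, map_smul, map_sum]
  simp only [map_smul]

lemma deriv_zBubble (hs : s = ((n : ℝ) - 2 * γ) / 2) (α : ℝ) (hμ : 0 < μ)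
    (ξ x : EuclideanSpace ℝ (Fin n)) : deriv (fun t => zBubble n γ α t ξ x) μ =
      α * (s * μ ^ (-s - 1)) * bubbleVariation s (0, 1) (μ⁻¹ • (x - ξ)) := by
  simp only [zBubble, ← hs]
  rw [mul_assoc]
  exact ((hasDerivAt_div_sq_add_norm_sq_rpow hμ s (x - ξ)).const_mul α).deriv

lemma fderiv_zBubble (hs : s = ((n : ℝ) - 2 * γ) / 2) (α : ℝ) (hμ : 0 < μ)
    (ξ x v : EuclideanSpace ℝ (Fin n)) : fderiv ℝ (fun ζ => zBubble n γ α μ ζ x) ξ v =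
      α * (s * μ ^ (-s - 1)) * bubbleVariation s (v, 0) (μ⁻¹ • (x - ξ)) := by
  simp only [zBubble, ← hs]
  rw [((hasFDerivAt_div_sq_add_norm_sq_rpow hμ s x ξ).const_mul α).fderiv, smul_apply, smul_apply,
    innerSL_apply_apply, div_sq_add_norm_sq_rpow hμ, Real.rpow_sub_one hμ.ne',
    bubbleVariation_apply, quadRatio, quad, inner_smul_right, norm_smul, mul_pow,
    Real.norm_eq_abs, sq_abs, real_inner_comm, smul_eq_mul, smul_eq_mul]
  field_simp
  ring

lemma exists_bubbleVariation_eq (hs : s = ((n : ℝ) - 2 * γ) / 2) (hs0 : 0 < s) (hα : 0 < α)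
    (hμ : 0 < μ) (ξ b : EuclideanSpace ℝ (Fin n)) (a : ℝ) :
    ∃ (c₀ : ℝ) (c : Fin n → ℝ), ∀ x : EuclideanSpace ℝ (Fin n),
      bubbleVariation s (b, a) (μ⁻¹ • (x - ξ)) = c₀ * deriv (fun t => zBubble n γ α t ξ x) μ +
        ∑ i : Fin n, c i *
          fderiv ℝ (fun ζ => zBubble n γ α μ ζ x) ξ (EuclideanSpace.single i (1 : ℝ)) := by
  have hC : α * (s * μ ^ (-s - 1)) ≠ 0 := by positivity
  refine ⟨a / (α * (s * μ ^ (-s - 1))), fun i => b i / (α * (s * μ ^ (-s - 1))), fun x => ?_⟩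
  have hcancel (u v : ℝ) :
      u / (α * (s * μ ^ (-s - 1))) * (α * (s * μ ^ (-s - 1)) * v) = u * v := by
    rw [← mul_assoc, div_mul_cancel₀ _ hC]
  simp only [bubbleVariation_eq_sum s b a, deriv_zBubble hs α hμ, fderiv_zBubble hs α hμ, hcancel,
    Pi.add_apply, Pi.smul_apply, Finset.sum_apply, smul_eq_mul]

end EuclideanSpace

theorem stmt15_general (n : ℕ) (γ : ℝ) (hγ0 : 0 < γ) (hγ1 : γ < 1) (hγn : γ < (n : ℝ) / 2)
    (p : ℝ) (hp : p = ((n : ℝ) + 2 * γ) / ((n : ℝ) - 2 * γ)) (α : ℝ) (hα : 0 < α)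
    (hz0 : ∀ x : EuclideanSpace ℝ (Fin n), ∃ L : ℝ,
      Tendsto (pvInt n γ (z0 n γ α) x) (𝓝[>] 0) (𝓝 L) ∧ fracLapConst n γ * L = z0 n γ α x ^ p)
    (μ : ℝ) (hμ : 0 < μ) (ξ : EuclideanSpace ℝ (Fin n))
    (φ : EuclideanSpace ℝ (Fin n) → ℝ) (hφ : ContDiff ℝ 2 φ) (hφbdd : ∃ C, ∀ x, |φ x| ≤ C)
    (hφeq : ∀ x : EuclideanSpace ℝ (Fin n), ∃ L : ℝ,
      Tendsto (pvInt n γ φ x) (𝓝[>] 0) (𝓝 L) ∧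
      fracLapConst n γ * L = p * zBubble n γ α μ ξ x ^ (p - 1) * φ x) :
    ∃ (c₀ : ℝ) (c : Fin n → ℝ), ∀ x : EuclideanSpace ℝ (Fin n),
      φ x = c₀ * deriv (fun t => zBubble n γ α t ξ x) μ +
        ∑ i : Fin n, c i *
          fderiv ℝ (fun ζ => zBubble n γ α μ ζ x) ξ (EuclideanSpace.single i (1 : ℝ)) := by
  obtain ⟨s, hs⟩ : ∃ s, s = ((n : ℝ) - 2 * γ) / 2 := ⟨_, rfl⟩
  have hs0 : 0 < s := by linarith
  have hp' : p = (s + 2 * γ) / s := by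
    rw [hp, div_eq_div_iff (by linarith) hs0.ne', hs]; ring
  have hcrit := isCriticalBubble_of_z0 hγ0 hγ1 hs0 hs hp' hα hz0
  have hrescale : ContDiff ℝ 2 fun y : EuclideanSpace ℝ (Fin n) => μ • y + ξ := by fun_prop
  have hweak := (hasPV_comp_dilation hγ0 hγ1 hs0 hs hp' hα hμ ξ hφeq).isWeakSol
    hcrit.isLevyKernel (hφ.comp hrescale)
    (.comp ⟨hφ.continuous, hφbdd⟩ hrescale.continuous)
    (isBoundedContinuous_linearizedPotential hγ0.le s _)
  obtain ⟨⟨b, a⟩, hba⟩ := hcrit.range_bubbleVariation.ge hweak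
  obtain ⟨c₀, c, hc⟩ := exists_bubbleVariation_eq hs hs0 hα hμ ξ b a
  refine ⟨c₀, c, fun x => ?_⟩
  rw [← hc, hba]
  beta_reduce
  rw [smul_inv_smul₀ hμ.ne', sub_add_cancel]

theorem stmt15 (n : ℕ) (hn : 1 ≤ n) (γ : ℝ) (hγ0 : 0 < γ) (hγ1 : γ < 1)
    (hγn : γ < (n : ℝ) / 2)
    (p : ℝ) (hp : p = ((n : ℝ) + 2 * γ) / ((n : ℝ) - 2 * γ))
    (α : ℝ) (hα : 0 < α)
    -- `z₀` solves `(-Δ)^γ z₀ = z₀^p` pointwise (the principal value exists at every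
    -- point and `C(n,γ)` times its limit is `z₀(x)^p`):
    (hz0 : ∀ x : EuclideanSpace ℝ (Fin n), ∃ L : ℝ,
      Tendsto (pvInt n γ (z0 n γ α) x) (𝓝[>] 0) (𝓝 L) ∧
      fracLapConst n γ * L = z0 n γ α x ^ p)
    (μ : ℝ) (hμ : 0 < μ) (ξ : EuclideanSpace ℝ (Fin n))
    (φ : EuclideanSpace ℝ (Fin n) → ℝ) (hφsmooth : ContDiff ℝ (⊤ : ℕ∞) φ)
    (hφbdd : ∃ C, ∀ x, |φ x| ≤ C)
    -- `φ` solves the linearized equation `(-Δ)^γ φ = p z_{μ,ξ}^{p-1} φ` pointwise,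
    -- with the principal value defining `(-Δ)^γ φ(x)` existing for every `x`:
    (hφeq : ∀ x : EuclideanSpace ℝ (Fin n), ∃ L : ℝ,
      Tendsto (pvInt n γ φ x) (𝓝[>] 0) (𝓝 L) ∧
      fracLapConst n γ * L = p * zBubble n γ α μ ξ x ^ (p - 1) * φ x) :
    ∃ (c₀ : ℝ) (c : Fin n → ℝ), ∀ x : EuclideanSpace ℝ (Fin n),
      φ x = c₀ * deriv (fun t => zBubble n γ α t ξ x) μ +
        ∑ i : Fin n, c i *
          fderiv ℝ (fun ζ => zBubble n γ α μ ζ x) ξ (EuclideanSpace.single i (1 : ℝ)) :=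
  stmt15_general n γ hγ0 hγ1 hγn p hp α hα hz0 μ hμ ξ φ
    (hφsmooth.of_le (WithTop.coe_le_coe.2 le_top)) hφbdd hφeq
end

section
/- Let γ ∈ (0, n/2). There exists a constant S > 0 such that for every Schwartz function u : ℝⁿ → ℂ one has S (∫_{ℝⁿ} |u(x)|^{2n/(n−2γ)} dx)^{(n−2γ)/n} ≤ ∫_{ℝⁿ} |ξ|^{2γ} |û(ξ)|² dξ, where û denotes the Fourier transform of u. -/
open MeasureTheory
open scoped FourierTransform

/-!
The argument is that of Chemin and Xu. Fix a level `t > 0` and split `u` smoothly at a frequency `A`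
(a sharp cutoff would leave the Schwartz class). By Cauchy–Schwarz against the weight `‖ξ‖^(-2γ)`,
integrable at the origin since `2γ < n`, the low-frequency part is pointwise at most a multiple of
`A^((n - 2γ)/2)` times the Sobolev norm of `u`; choose `A = A(t)` so that this bound is `t / 2`.
Then `{‖u‖ > t}` is contained in the set where the high-frequency part is at least `t / 2`, and
Chebyshev and Plancherel bound its measure by `4 / t²` times the integral of `‖û‖²` over
`‖ξ‖ ≥ A(t)`. Multiplying by `p t^(p - 1)` and integrating in `t`, the layer cake formula gives the
integral of `‖u‖^p` on the left and, on the right, that of a power of `‖ξ‖` against `‖û(ξ)‖² dξ`;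
the critical exponent `p` is the one for which that power is `‖ξ‖^(2γ)`.
-/

section Measure

open Set ENNReal

variable {α β F : Type*} [MeasurableSpace α] [MeasurableSpace β] [NormedAddCommGroup F]

lemma integral_norm_le_sqrt_mul_sqrt {μ : Measure α} {f : α → F} {w : α → ℝ}
    (hw : ∀ᵐ x ∂μ, 0 < w x) (hf : AEStronglyMeasurable f μ)
    (hwi : Integrable (fun x ↦ (w x)⁻¹) μ) (hwf : Integrable (fun x ↦ w x * ‖f x‖ ^ 2) μ) :
    ∫ x, ‖f x‖ ∂μ ≤ √(∫ x, (w x)⁻¹ ∂μ) * √(∫ x, w x * ‖f x‖ ^ 2 ∂μ) := by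
  have hw_sqrt_inv : (fun x ↦ √((w x)⁻¹) ^ 2) =ᵐ[μ] fun x ↦ (w x)⁻¹ := by
    filter_upwards [hw] with x hx using Real.sq_sqrt (inv_pos.2 hx).le
  have hw_sqrt_mul : (fun x ↦ (√(w x) * ‖f x‖) ^ 2) =ᵐ[μ] fun x ↦ w x * ‖f x‖ ^ 2 := by
    filter_upwards [hw] with x hx
    rw [mul_pow, Real.sq_sqrt hx.le]
  have hw_meas : AEStronglyMeasurable w μ := by
    refine hwi.aemeasurable.inv.aestronglyMeasurable.congr (.of_forall fun x ↦ ?_)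
    exact inv_inv (w x)
  have memLp_inv : MemLp (fun x ↦ √((w x)⁻¹)) (ENNReal.ofReal 2) μ := by
    rw [ofReal_ofNat]
    refine (memLp_two_iff_integrable_sq ?_).2 (hwi.congr hw_sqrt_inv.symm)
    exact Real.continuous_sqrt.comp_aestronglyMeasurable hwi.aestronglyMeasurable
  have memLp_mul : MemLp (fun x ↦ √(w x) * ‖f x‖) (ENNReal.ofReal 2) μ := by
    rw [ofReal_ofNat]
    refine (memLp_two_iff_integrable_sq ?_).2 (hwf.congr hw_sqrt_mul.symm)
    exact (Real.continuous_sqrt.comp_aestronglyMeasurable hw_meas).mul hf.norm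
  calc ∫ x, ‖f x‖ ∂μ = ∫ x, √((w x)⁻¹) * (√(w x) * ‖f x‖) ∂μ := by
        refine integral_congr_ae ?_
        filter_upwards [hw] with x hx
        rw [Real.sqrt_inv, inv_mul_cancel_left₀ (Real.sqrt_pos.2 hx).ne']
    _ ≤ (∫ x, √((w x)⁻¹) ^ (2 : ℝ) ∂μ) ^ (1 / 2 : ℝ) *
          (∫ x, (√(w x) * ‖f x‖) ^ (2 : ℝ) ∂μ) ^ (1 / 2 : ℝ) :=
        integral_mul_le_Lp_mul_Lq_of_nonneg .two_two (.of_forall fun x ↦ Real.sqrt_nonneg _)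
          (.of_forall fun x ↦ by positivity) memLp_inv memLp_mul
    _ = √(∫ x, (w x)⁻¹ ∂μ) * √(∫ x, w x * ‖f x‖ ^ 2 ∂μ) := by
        simp only [Real.rpow_two]
        rw [integral_congr_ae hw_sqrt_inv, integral_congr_ae hw_sqrt_mul, ← Real.sqrt_eq_rpow,
          ← Real.sqrt_eq_rpow]

lemma meas_lt_norm_add_le {μ : Measure α} {g h : α → F} {t : ℝ} (ht : 0 < t)
    (hg : ∀ x, ‖g x‖ ≤ t / 2) (hh : AEStronglyMeasurable h μ) :
    μ {x | t < ‖g x + h x‖} ≤ ENNReal.ofReal (4 / t ^ 2) * ∫⁻ x, ‖h x‖ₑ ^ 2 ∂μ := by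
  have h_large x (hx : t < ‖g x + h x‖) : t / 2 ≤ ‖h x‖ := by
    linarith [norm_add_le (g x) (h x), hg x]
  calc μ {x | t < ‖g x + h x‖} ≤ μ {x | ENNReal.ofReal (t / 2) ^ 2 ≤ ‖h x‖ₑ ^ 2} := by
        refine measure_mono fun x hx ↦ ?_
        rw [mem_ofPred_eq, ← ofReal_norm]
        gcongr
        exact h_large x hx
    _ ≤ (∫⁻ x, ‖h x‖ₑ ^ 2 ∂μ) / ENNReal.ofReal (t / 2) ^ 2 :=
        meas_ge_le_lintegral_div (hh.enorm.pow_const 2) (by simp [ht]) (by simp)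
    _ = ENNReal.ofReal (4 / t ^ 2) * ∫⁻ x, ‖h x‖ₑ ^ 2 ∂μ := by
        rw [← ofReal_pow (by positivity), div_eq_mul_inv, mul_comm,
          ← ofReal_inv_of_pos (by positivity)]
        congr 3
        field_simp
        norm_num

lemma lintegral_rpow_le_of_forall_meas_lt_le {μ : Measure α} {ν : Measure β} {f : α → ℝ}
    {ψ : β → ℝ} {c p q : ℝ} (hf : AEMeasurable f μ) (hf_nonneg : 0 ≤ᵐ[μ] f)
    (hψ : AEMeasurable ψ ν) (hψ_nonneg : 0 ≤ᵐ[ν] ψ) (hp : 0 < p) (hqp : q < p)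
    (h : ∀ t, 0 < t → μ {x | t < f x} ≤ ENNReal.ofReal (c / t ^ q) * ν {y | t ≤ ψ y}) :
    ∫⁻ x, ENNReal.ofReal (f x ^ p) ∂μ ≤
      ENNReal.ofReal (p / (p - q) * c) * ∫⁻ y, ENNReal.ofReal (ψ y ^ (p - q)) ∂ν := by
  have hpq : 0 < p - q := sub_pos.2 hqp
  have h_weight t (ht : 0 < t) : ENNReal.ofReal (c / t ^ q) * ENNReal.ofReal (t ^ (p - 1)) =
      ENNReal.ofReal c * ENNReal.ofReal (t ^ (p - q - 1)) := by
    rw [← ofReal_mul' (by positivity), ← ofReal_mul' (by positivity), sub_right_comm,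
      Real.rpow_sub ht (p - 1), mul_div_left_comm, div_mul_eq_mul_div]
    congr 1
    ring
  rw [lintegral_rpow_eq_lintegral_meas_lt_mul μ hf_nonneg hf hp,
    lintegral_rpow_eq_lintegral_meas_le_mul ν hψ_nonneg hψ hpq]
  calc ENNReal.ofReal p * ∫⁻ t in Ioi 0, μ {x | t < f x} * ENNReal.ofReal (t ^ (p - 1))
      ≤ ENNReal.ofReal p * ∫⁻ t in Ioi 0, ENNReal.ofReal c *
          (ν {y | t ≤ ψ y} * ENNReal.ofReal (t ^ (p - q - 1))) := by
        gcongr ENNReal.ofReal p * ?_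
        refine setLIntegral_mono' measurableSet_Ioi fun t (ht : 0 < t) ↦ ?_
        calc μ {x | t < f x} * ENNReal.ofReal (t ^ (p - 1))
            ≤ ENNReal.ofReal (c / t ^ q) * ν {y | t ≤ ψ y} * ENNReal.ofReal (t ^ (p - 1)) := by
              gcongr
              exact h t ht
          _ = _ := by rw [mul_right_comm, h_weight t ht, mul_right_comm, mul_assoc]
    _ = ENNReal.ofReal (p / (p - q) * c) * (ENNReal.ofReal (p - q) *
          ∫⁻ t in Ioi 0, ν {y | t ≤ ψ y} * ENNReal.ofReal (t ^ (p - q - 1))) := by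
        rw [lintegral_const_mul' _ _ ofReal_ne_top, ← mul_assoc, ← mul_assoc, ← ofReal_mul hp.le,
          ← ofReal_mul' hpq.le, mul_right_comm, div_mul_cancel₀ _ hpq.ne']

end Measure

section WeightedBall

open Set Metric Module

variable {E : Type*} [NormedAddCommGroup E] [NormedSpace ℝ E] [FiniteDimensional ℝ E]
  [MeasurableSpace E] [BorelSpace E] (μ : Measure E) [μ.IsAddHaarMeasure]

lemma integrableOn_ball_norm_rpow_neg [Nontrivial E] {a : ℝ} (ha : a < finrank ℝ E) (R : ℝ) :
    IntegrableOn (fun x : E ↦ ‖x‖ ^ (-a)) (ball 0 R) μ := by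
  refine integrableOn_ball_of_norm_le_rpow (C := 1) finrank_pos ha (.of_forall fun x ↦ ?_)
    (measurable_norm.pow_const _).aestronglyMeasurable
  rw [Real.norm_of_nonneg (by positivity), one_mul]

lemma setIntegral_ball_norm_rpow (a : ℝ) {R : ℝ} (hR : 0 < R) :
    ∫ x in ball (0 : E) R, ‖x‖ ^ a ∂μ =
      R ^ (finrank ℝ E + a) * ∫ x in ball (0 : E) 1, ‖x‖ ^ a ∂μ := by
  have h_scale := Measure.setIntegral_comp_smul_of_pos μ (fun x : E ↦ ‖x‖ ^ a) (ball 0 1) hR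
  simp_rw [smul_unitBall_of_pos hR, norm_smul, Real.norm_of_nonneg hR.le,
    Real.mul_rpow hR.le (norm_nonneg _), integral_const_mul, smul_eq_mul] at h_scale
  rw [Real.rpow_add hR, Real.rpow_natCast, mul_assoc, h_scale,
    mul_inv_cancel_left₀ (by positivity)]

lemma setIntegral_ball_norm_le [Nontrivial E] {F : Type*} [NormedAddCommGroup F] {γ R : ℝ}
    (hγ : 2 * γ < finrank ℝ E) (hR : 0 < R) {f : E → F} (hf : AEStronglyMeasurable f μ)
    (hf_int : Integrable (fun x ↦ ‖x‖ ^ (2 * γ) * ‖f x‖ ^ 2) μ) :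
    ∫ x in ball 0 R, ‖f x‖ ∂μ ≤
      √(∫ x in ball (0 : E) 1, ‖x‖ ^ (-(2 * γ)) ∂μ) * R ^ ((finrank ℝ E - 2 * γ) / 2) *
        √(∫ x, ‖x‖ ^ (2 * γ) * ‖f x‖ ^ 2 ∂μ) := by
  have h_inv (x : E) : (‖x‖ ^ (2 * γ))⁻¹ = ‖x‖ ^ (-(2 * γ)) :=
    (Real.rpow_neg (norm_nonneg x) _).symm
  have h_ball : √(∫ x in ball (0 : E) R, ‖x‖ ^ (-(2 * γ)) ∂μ) =
      √(∫ x in ball (0 : E) 1, ‖x‖ ^ (-(2 * γ)) ∂μ) * R ^ ((finrank ℝ E - 2 * γ) / 2) := by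
    rw [setIntegral_ball_norm_rpow μ _ hR, ← sub_eq_add_neg, Real.sqrt_mul (by positivity),
      mul_comm, Real.sqrt_eq_rpow (R ^ _), ← Real.rpow_mul hR.le, mul_one_div]
  have h_pos : ∀ᵐ x : E ∂μ, 0 < ‖x‖ ^ (2 * γ) := by
    filter_upwards [compl_mem_ae_iff.2 (measure_singleton (0 : E))] with x hx
    exact Real.rpow_pos_of_pos (norm_pos_iff.2 hx) _
  calc ∫ x in ball 0 R, ‖f x‖ ∂μ
      ≤ √(∫ x in ball 0 R, (‖x‖ ^ (2 * γ))⁻¹ ∂μ) *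
          √(∫ x in ball 0 R, ‖x‖ ^ (2 * γ) * ‖f x‖ ^ 2 ∂μ) := by
        refine integral_norm_le_sqrt_mul_sqrt (ae_restrict_of_ae h_pos) hf.restrict ?_
          hf_int.integrableOn
        simpa only [h_inv, IntegrableOn] using integrableOn_ball_norm_rpow_neg μ hγ R
    _ ≤ √(∫ x in ball 0 R, (‖x‖ ^ (2 * γ))⁻¹ ∂μ) * √(∫ x, ‖x‖ ^ (2 * γ) * ‖f x‖ ^ 2 ∂μ) := by
        refine mul_le_mul_of_nonneg_left (Real.sqrt_le_sqrt ?_) (Real.sqrt_nonneg _)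
        exact setIntegral_le_integral hf_int (.of_forall fun x ↦ by positivity)
    _ = _ := by simp only [h_inv, h_ball]

end WeightedBall

lemma rpow_le_one_add_pow_ceil {x a : ℝ} (hx : 0 ≤ x) (ha : 0 ≤ a) : x ^ a ≤ 1 + x ^ ⌈a⌉₊ := by
  rcases le_total x 1 with h | h
  · exact (Real.rpow_le_one hx h ha).trans (le_add_of_nonneg_right (by positivity))
  · calc x ^ a ≤ x ^ (⌈a⌉₊ : ℝ) := Real.rpow_le_rpow_of_exponent_le h (Nat.le_ceil a)
      _ = x ^ ⌈a⌉₊ := Real.rpow_natCast x _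
      _ ≤ 1 + x ^ ⌈a⌉₊ := le_add_of_nonneg_left zero_le_one

section Schwartz

open Set Metric SchwartzMap

variable {E F : Type*} [NormedAddCommGroup E] [NormedSpace ℝ E] [FiniteDimensional ℝ E]
  [NormedAddCommGroup F] [NormedSpace ℝ F]

lemma exists_schwartzMap_add_eq_of_norm_le_indicator (f : 𝓢(E, F)) {r R : ℝ} (hr : 0 < r)
    (hrR : r < R) :
    ∃ g h : 𝓢(E, F), g + h = f ∧ (∀ x, ‖g x‖ ≤ (ball 0 R).indicator (‖f ·‖) x) ∧
      ∀ x, ‖h x‖ ≤ (ball 0 r)ᶜ.indicator (‖f ·‖) x := by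
  let φ : ContDiffBump (0 : E) := ⟨r, R, hr, hrR⟩
  have hφ : (fun x ↦ φ x).HasTemperateGrowth := φ.hasCompactSupport.hasTemperateGrowth φ.contDiff
  have hφf x : smulLeftCLM F φ f x = φ x • f x := smulLeftCLM_apply_apply hφ f x
  refine ⟨smulLeftCLM F φ f, f - smulLeftCLM F φ f, by simp, fun x ↦ ?_, fun x ↦ ?_⟩
  · rw [hφf, norm_smul, Real.norm_of_nonneg φ.nonneg]
    by_cases hx : x ∈ ball (0 : E) R
    · rw [indicator_of_mem hx]
      exact mul_le_of_le_one_left (norm_nonneg _) φ.le_one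
    · rw [indicator_of_notMem hx, φ.zero_of_le_dist (by simpa using hx), zero_mul]
  · have h_sub : f x - φ x • f x = (1 - φ x) • f x := by rw [sub_smul, one_smul]
    rw [sub_apply, hφf, h_sub, norm_smul, Real.norm_of_nonneg (sub_nonneg.2 φ.le_one)]
    by_cases hx : x ∈ ball (0 : E) r
    · rw [indicator_of_notMem (notMem_compl_iff.2 hx),
        φ.one_of_mem_closedBall (ball_subset_closedBall hx), sub_self, zero_mul]
    · rw [indicator_of_mem (mem_compl hx)]
      exact mul_le_of_le_one_left (norm_nonneg _) (sub_le_self 1 φ.nonneg)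

variable [MeasurableSpace E] [BorelSpace E]

lemma integrable_norm_rpow_mul_norm_sq (μ : Measure E) [μ.HasTemperateGrowth] (f : 𝓢(E, F))
    {a : ℝ} (ha : 0 ≤ a) : Integrable (fun x ↦ ‖x‖ ^ a * ‖f x‖ ^ 2) μ := by
  have h_bound x : ‖f x‖ ≤ SchwartzMap.seminorm ℝ 0 0 f := norm_le_seminorm ℝ f x
  refine (((f.integrable_pow_mul μ 0).add (f.integrable_pow_mul μ ⌈a⌉₊)).const_mul
    (SchwartzMap.seminorm ℝ 0 0 f)).mono' ?_ (.of_forall fun x ↦ ?_)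
  · exact (measurable_norm.pow_const a).aestronglyMeasurable.mul
      (f.continuous.norm.pow 2).aestronglyMeasurable
  · rw [Real.norm_of_nonneg (by positivity)]
    calc ‖x‖ ^ a * ‖f x‖ ^ 2
        ≤ (1 + ‖x‖ ^ ⌈a⌉₊) * (SchwartzMap.seminorm ℝ 0 0 f * ‖f x‖) := by
          rw [pow_two]
          gcongr
          · exact rpow_le_one_add_pow_ceil (norm_nonneg x) ha
          · exact h_bound x
      _ = _ := by simp only [Pi.add_apply, pow_zero]; ring

lemma lintegral_norm_rpow_mul_enorm_sq (μ : Measure E) [μ.HasTemperateGrowth] (f : 𝓢(E, F))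
    {a : ℝ} (ha : 0 ≤ a) :
    ∫⁻ x, ENNReal.ofReal (‖x‖ ^ a) * ‖f x‖ₑ ^ 2 ∂μ =
      ENNReal.ofReal (∫ x, ‖x‖ ^ a * ‖f x‖ ^ 2 ∂μ) := by
  rw [ofReal_integral_eq_lintegral_ofReal (integrable_norm_rpow_mul_norm_sq μ f ha)
    (.of_forall fun x ↦ by positivity)]
  refine lintegral_congr fun x ↦ ?_
  rw [ENNReal.ofReal_mul (by positivity), ENNReal.ofReal_pow (norm_nonneg _), ofReal_norm]

end Schwartz

section Fourier

open SchwartzMap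

variable {E F : Type*} [NormedAddCommGroup E] [InnerProductSpace ℝ E] [FiniteDimensional ℝ E]
  [MeasurableSpace E] [BorelSpace E] [NormedAddCommGroup F] [NormedSpace ℂ F]

/-- The measure `‖û(ξ)‖² dξ`, which records how the `L²` mass of `u` is distributed over the
frequencies; the frequency bounds below are stated through it. -/
noncomputable def spectralMeasure (u : 𝓢(E, F)) : Measure E :=
  volume.withDensity fun ξ ↦ ‖𝓕 u ξ‖ₑ ^ 2

/-- The homogeneous Sobolev norm of order `γ`, the quantity that controls the `L^p` norm of `u`.
No factor `(2π)^γ` is inserted, so for Mathlib's `û(ξ) = ∫ exp(-2πi⟨x, ξ⟩) u(x) dx` it is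
`(2π)^(-γ)` times the `L²` norm of `(-Δ)^(γ/2) u`. -/
noncomputable def homogeneousSobolevNorm (γ : ℝ) (u : 𝓢(E, F)) : ℝ :=
  √(∫ ξ, ‖ξ‖ ^ (2 * γ) * ‖𝓕 u ξ‖ ^ 2)

lemma homogeneousSobolevNorm_nonneg (γ : ℝ) (u : 𝓢(E, F)) : 0 ≤ homogeneousSobolevNorm γ u :=
  Real.sqrt_nonneg _

lemma homogeneousSobolevNorm_sq (γ : ℝ) (u : 𝓢(E, F)) :
    homogeneousSobolevNorm γ u ^ 2 = ∫ ξ, ‖ξ‖ ^ (2 * γ) * ‖𝓕 u ξ‖ ^ 2 :=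
  Real.sq_sqrt (integral_nonneg fun ξ ↦ by positivity)

lemma lintegral_mul_norm_rpow_spectralMeasure {γ a q c : ℝ} (hγ : 0 ≤ γ) (haq : a * q = 2 * γ)
    (hc : 0 ≤ c) (u : 𝓢(E, F)) :
    ∫⁻ ξ, ENNReal.ofReal ((c * ‖ξ‖ ^ a) ^ q) ∂spectralMeasure u =
      ENNReal.ofReal (c ^ q * homogeneousSobolevNorm γ u ^ 2) := by
  have h_weight (ξ : E) : ENNReal.ofReal ((c * ‖ξ‖ ^ a) ^ q) =
      ENNReal.ofReal (c ^ q) * ENNReal.ofReal (‖ξ‖ ^ (2 * γ)) := by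
    rw [Real.mul_rpow hc (by positivity), ← Real.rpow_mul (norm_nonneg ξ), haq,
      ENNReal.ofReal_mul (by positivity)]
  have h_energy : ∫⁻ ξ, ENNReal.ofReal (‖ξ‖ ^ (2 * γ)) ∂spectralMeasure u =
      ENNReal.ofReal (homogeneousSobolevNorm γ u ^ 2) := by
    rw [spectralMeasure, lintegral_withDensity_eq_lintegral_mul _
      ((𝓕 u).continuous.enorm.measurable.pow_const 2)
      (measurable_norm.pow_const _).ennreal_ofReal, homogeneousSobolevNorm_sq,
      ← lintegral_norm_rpow_mul_enorm_sq volume (𝓕 u) (by positivity)]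
    simp only [Pi.mul_apply, mul_comm]
  simp only [h_weight]
  rw [lintegral_const_mul' _ _ ENNReal.ofReal_ne_top, h_energy, ENNReal.ofReal_mul (by positivity)]

lemma norm_fourierInv_le_integral_norm (f : 𝓢(E, F)) (x : E) : ‖𝓕⁻ f x‖ ≤ ∫ ξ, ‖f ξ‖ := by
  rw [fourierInv_coe, Real.fourierInv_eq]
  exact (norm_integral_le_integral_norm _).trans_eq (by simp only [Circle.norm_smul])

end Fourier

section Plancherel

open Set Metric Module SchwartzMap

variable {E F : Type*} [NormedAddCommGroup E] [InnerProductSpace ℝ E] [FiniteDimensional ℝ E]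
  [MeasurableSpace E] [BorelSpace E] [NormedAddCommGroup F] [InnerProductSpace ℂ F]
  [CompleteSpace F]

lemma lintegral_enorm_sq_fourier (f : 𝓢(E, F)) : ∫⁻ ξ, ‖𝓕 f ξ‖ₑ ^ 2 = ∫⁻ x, ‖f x‖ₑ ^ 2 := by
  have h_ofReal (g : 𝓢(E, F)) : ∫⁻ x, ‖g x‖ₑ ^ 2 = ENNReal.ofReal (∫ x, ‖g x‖ ^ 2) := by
    simpa only [Real.rpow_zero, one_mul, ENNReal.ofReal_one] using
      lintegral_norm_rpow_mul_enorm_sq volume g le_rfl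
  rw [h_ofReal, h_ofReal, integral_norm_sq_fourier]

lemma lintegral_enorm_sq_fourierInv_le {u h : 𝓢(E, F)} {s : Set E} (hs : MeasurableSet s)
    (hh : ∀ ξ, ‖h ξ‖ ≤ s.indicator (‖𝓕 u ·‖) ξ) :
    ∫⁻ x, ‖𝓕⁻ h x‖ₑ ^ 2 ≤ spectralMeasure u s := by
  rw [← lintegral_enorm_sq_fourier, FourierTransform.fourier_fourierInv_eq, spectralMeasure,
    withDensity_apply _ hs, ← lintegral_indicator hs]
  refine lintegral_mono fun ξ ↦ ?_
  by_cases hξ : ξ ∈ s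
  · have h_le : ‖h ξ‖ ≤ ‖𝓕 u ξ‖ := by simpa only [indicator_of_mem hξ] using hh ξ
    rw [indicator_of_mem hξ]
    gcongr
    exact enorm_le_iff_norm_le.2 h_le
  · have h_zero : h ξ = 0 := by simpa only [indicator_of_notMem hξ, norm_le_zero_iff] using hh ξ
    simp [h_zero]

lemma meas_lt_norm_le_spectralMeasure (u : 𝓢(E, F)) {r R t : ℝ} (hr : 0 < r) (hrR : r < R)
    (ht : 0 < t) (hu : ∫ ξ in ball 0 R, ‖𝓕 u ξ‖ ≤ t / 2) :
    volume {x | t < ‖u x‖} ≤ ENNReal.ofReal (4 / t ^ 2) * spectralMeasure u (ball 0 r)ᶜ := by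
  obtain ⟨g, h, hgh, hg, hh⟩ := exists_schwartzMap_add_eq_of_norm_le_indicator (𝓕 u) hr hrR
  have hu_split x : u x = 𝓕⁻ g x + 𝓕⁻ h x := by
    rw [← add_apply, ← FourierTransform.fourierInv_add, hgh,
      FourierTransform.fourierInv_fourier_eq]
  have hg_small x : ‖𝓕⁻ g x‖ ≤ t / 2 := by
    calc ‖𝓕⁻ g x‖ ≤ ∫ ξ, ‖g ξ‖ := norm_fourierInv_le_integral_norm g x
      _ ≤ ∫ ξ, (ball 0 R).indicator (‖𝓕 u ·‖) ξ :=
        integral_mono g.integrable.norm ((𝓕 u).integrable.norm.indicator measurableSet_ball) hg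
      _ = ∫ ξ in ball 0 R, ‖𝓕 u ξ‖ := integral_indicator measurableSet_ball
      _ ≤ t / 2 := hu
  simp only [hu_split]
  calc volume {x | t < ‖𝓕⁻ g x + 𝓕⁻ h x‖}
      ≤ ENNReal.ofReal (4 / t ^ 2) * ∫⁻ x, ‖𝓕⁻ h x‖ₑ ^ 2 :=
        meas_lt_norm_add_le ht hg_small (𝓕⁻ h).continuous.aestronglyMeasurable
    _ ≤ ENNReal.ofReal (4 / t ^ 2) * spectralMeasure u (ball 0 r)ᶜ := by
        gcongr
        exact lintegral_enorm_sq_fourierInv_le measurableSet_ball.compl hh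

variable (E F)

lemma exists_meas_lt_norm_le_spectralMeasure [Nontrivial E] {γ : ℝ} (hγ : 0 ≤ γ)
    (hγE : 2 * γ < finrank ℝ E) :
    ∃ C : ℝ, 0 < C ∧ ∀ (u : 𝓢(E, F)) (M : ℝ), 0 < M → homogeneousSobolevNorm γ u ≤ M →
      ∀ t : ℝ, 0 < t → volume {x | t < ‖u x‖} ≤ ENNReal.ofReal (4 / t ^ 2) *
        spectralMeasure u {ξ | t ≤ C * M * ‖ξ‖ ^ ((finrank ℝ E - 2 * γ) / 2)} := by
  obtain ⟨B, hB⟩ := exists_gt √(∫ x in ball (0 : E) 1, ‖x‖ ^ (-(2 * γ)))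
  have hB_pos : 0 < B := (Real.sqrt_nonneg _).trans_lt hB
  set b := (finrank ℝ E - 2 * γ) / 2 with hb
  have hb_pos : 0 < b := by rw [hb]; linarith
  refine ⟨2 * B * 2 ^ b, by positivity, fun u M hM huM t ht ↦ ?_⟩
  obtain ⟨A, hA, hAb⟩ : ∃ A : ℝ, 0 < A ∧ 2 * B * 2 ^ b * M * A ^ b = t := by
    refine ⟨(t / (2 * B * 2 ^ b * M)) ^ b⁻¹, by positivity, ?_⟩
    rw [Real.rpow_inv_rpow (by positivity) hb_pos.ne', mul_div_cancel₀ _ (by positivity)]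
  have h_low : ∫ ξ in ball 0 (2 * A), ‖𝓕 u ξ‖ ≤ t / 2 := by
    calc ∫ ξ in ball 0 (2 * A), ‖𝓕 u ξ‖
        ≤ √(∫ x in ball (0 : E) 1, ‖x‖ ^ (-(2 * γ))) * (2 * A) ^ b *
            homogeneousSobolevNorm γ u :=
          setIntegral_ball_norm_le volume hγE (by positivity)
            (𝓕 u).continuous.aestronglyMeasurable
            (integrable_norm_rpow_mul_norm_sq volume (𝓕 u) (by positivity))
      _ ≤ B * (2 * A) ^ b * M := by gcongr; exact homogeneousSobolevNorm_nonneg γ u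
      _ = t / 2 := by rw [← hAb, Real.mul_rpow zero_le_two hA.le]; ring
  have h_high : (ball (0 : E) A)ᶜ = {ξ | t ≤ 2 * B * 2 ^ b * M * ‖ξ‖ ^ b} := by
    ext ξ
    rw [mem_compl_iff, mem_ball_zero_iff, not_lt, mem_ofPred_eq, ← hAb,
      mul_le_mul_iff_right₀ (by positivity), Real.rpow_le_rpow_iff hA.le (norm_nonneg ξ) hb_pos]
  rw [← h_high]
  exact meas_lt_norm_le_spectralMeasure u hA (by linarith) ht h_low

theorem exists_integral_norm_rpow_le_homogeneousSobolevNorm {γ : ℝ} (hγ : 0 < γ)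
    (hγE : 2 * γ < finrank ℝ E) {p : ℝ} (hp : p = 2 * finrank ℝ E / (finrank ℝ E - 2 * γ)) :
    ∃ K : ℝ, 0 < K ∧ ∀ (u : 𝓢(E, F)) (M : ℝ), 0 < M → homogeneousSobolevNorm γ u ≤ M →
      ∫ x, ‖u x‖ ^ p ≤ K * M ^ p := by
  have hs : 0 < finrank ℝ E - 2 * γ := sub_pos.2 hγE
  have : Nontrivial E := nontrivial_of_finrank_pos (R := ℝ) (by
    exact_mod_cast (by linarith : (0 : ℝ) < finrank ℝ E))
  have hp2 : 2 < p := by rw [hp, lt_div_iff₀ hs]; linarith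
  have : 0 < p - 2 := sub_pos.2 hp2
  have h_exponent : (finrank ℝ E - 2 * γ) / 2 * (p - 2) = 2 * γ := by
    rw [hp]
    field_simp
    ring
  obtain ⟨C, hC, h_weak⟩ := exists_meas_lt_norm_le_spectralMeasure E F hγ.le hγE
  refine ⟨p / (p - 2) * 4 * C ^ (p - 2), by positivity, fun u M hM huM ↦ ?_⟩
  rw [integral_eq_lintegral_of_nonneg_ae (.of_forall fun x ↦ by positivity)
    (u.continuous.norm.measurable.pow_const _).aestronglyMeasurable]
  refine ENNReal.toReal_le_of_le_ofReal (by positivity) ?_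
  calc ∫⁻ x, ENNReal.ofReal (‖u x‖ ^ p)
      ≤ ENNReal.ofReal (p / (p - 2) * 4) * ∫⁻ ξ, ENNReal.ofReal
          ((C * M * ‖ξ‖ ^ ((finrank ℝ E - 2 * γ) / 2)) ^ (p - 2)) ∂spectralMeasure u := by
        refine lintegral_rpow_le_of_forall_meas_lt_le u.continuous.norm.measurable.aemeasurable
          (.of_forall fun x ↦ norm_nonneg (u x))
          ((measurable_norm.pow_const _).const_mul _).aemeasurable
          (.of_forall fun ξ ↦ by positivity) (by linarith) hp2 fun t ht ↦ ?_
        rw [Real.rpow_two]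
        exact h_weak u M hM huM t ht
    _ = ENNReal.ofReal (p / (p - 2) * 4) *
          ENNReal.ofReal ((C * M) ^ (p - 2) * homogeneousSobolevNorm γ u ^ 2) := by
        rw [lintegral_mul_norm_rpow_spectralMeasure hγ.le h_exponent (by positivity)]
    _ ≤ ENNReal.ofReal (p / (p - 2) * 4) * ENNReal.ofReal ((C * M) ^ (p - 2) * M ^ 2) := by
        gcongr
        exact homogeneousSobolevNorm_nonneg γ u
    _ = ENNReal.ofReal (p / (p - 2) * 4 * C ^ (p - 2) * M ^ p) := by
        rw [← ENNReal.ofReal_mul (by positivity), Real.mul_rpow hC.le hM.le, mul_assoc (C ^ _),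
          ← Real.rpow_add_natCast hM.ne', Nat.cast_ofNat, sub_add_cancel, ← mul_assoc]

theorem stmt17_general {γ : ℝ} (hγ : 0 < γ) (hγE : γ < (finrank ℝ E : ℝ) / 2) :
    ∃ S : ℝ, 0 < S ∧ ∀ u : 𝓢(E, F),
      S * (∫ x, ‖u x‖ ^ (2 * (finrank ℝ E : ℝ) / (finrank ℝ E - 2 * γ))) ^
          (((finrank ℝ E : ℝ) - 2 * γ) / finrank ℝ E) ≤
        ∫ ξ, ‖ξ‖ ^ (2 * γ) * ‖𝓕 (⇑u) ξ‖ ^ 2 := by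
  have hd : (0 : ℝ) < finrank ℝ E := by linarith
  have hs : 0 < finrank ℝ E - 2 * γ := by linarith
  obtain ⟨K, hK, h_sobolev⟩ := exists_integral_norm_rpow_le_homogeneousSobolevNorm E F hγ
    (by linarith) rfl
  set p := 2 * (finrank ℝ E : ℝ) / (finrank ℝ E - 2 * γ) with hp
  set q := ((finrank ℝ E : ℝ) - 2 * γ) / finrank ℝ E with hq
  have hpq : p * q = 2 := by rw [hp, hq]; field_simp
  -- Bounding by every `J` above the energy, not by the energy itself, covers the case of energy
  -- zero, in which there is no level-dependent frequency threshold to choose.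
  refine ⟨(K ^ q)⁻¹, by positivity, fun u ↦ le_of_forall_gt_imp_ge_of_dense fun J hJ ↦ ?_⟩
  have hJ_pos : 0 < J := (integral_nonneg fun ξ ↦ by positivity).trans_lt hJ
  rw [inv_mul_le_iff₀ (by positivity)]
  calc (∫ x, ‖u x‖ ^ p) ^ q ≤ (K * √J ^ p) ^ q := by
        gcongr
        exact h_sobolev u √J (Real.sqrt_pos.2 hJ_pos) (Real.sqrt_le_sqrt hJ.le)
    _ = K ^ q * J := by
        rw [Real.mul_rpow hK.le (by positivity), ← Real.rpow_mul (Real.sqrt_nonneg J), hpq,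
          Real.rpow_two, Real.sq_sqrt hJ_pos.le]

end Plancherel

theorem stmt17 (n : ℕ) (hn : 1 ≤ n) (γ : ℝ) (hγ : 0 < γ) (hγn : γ < (n : ℝ) / 2) :
    ∃ S : ℝ, 0 < S ∧ ∀ u : SchwartzMap (EuclideanSpace ℝ (Fin n)) ℂ,
      S * (∫ x : EuclideanSpace ℝ (Fin n),
            ‖u x‖ ^ (2 * (n : ℝ) / ((n : ℝ) - 2 * γ))) ^ (((n : ℝ) - 2 * γ) / (n : ℝ)) ≤
        ∫ ξ : EuclideanSpace ℝ (Fin n), ‖ξ‖ ^ (2 * γ) * ‖𝓕 (⇑u) ξ‖ ^ 2 := by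
  simpa only [finrank_euclideanSpace_fin] using
    stmt17_general (EuclideanSpace ℝ (Fin n)) ℂ hγ (by rwa [finrank_euclideanSpace_fin])
end
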